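/- arXiv:2201.02717 — 2 statements merged into one kernel-verified Lean document; each statement's English description precedes it below -/
import Mathlib

section
/- Let R be a standard graded k-algebra of Krull dimension d ≥ 1, I a homogeneous ideal with R/I of finite length, and M a finitely generated ℕ-graded R-module. For each n define g_n : ℝ → ℝ by g_n(x) = p^{-n(d−1)} λ_k((M/I^{[p^n]}M)_{⌊xp^n⌋}), and suppose g_n converges pointwise to a compactly supported function g (the Hilbert–Kunz density function). Then for every complex number y, the holomorphic Fourier transform ∫_ℝ g(x) e^{−iyx} dx equals the Frobenius–Poincaré function value F(M,R,I,d)(y). -/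
/-!
Since `g_n(x)` depends only on `⌊xpⁿ⌋`, the value `F_n(y)` is exactly the integral over `ℝ` of
`g_n(x) e^{-iy⌊xpⁿ⌋/pⁿ}`, and the theorem is an instance of dominated convergence.

The domination comes from two bounds uniform in `n`. As `R/I` is Artinian, `I` contains a power of
every element of degree one; hence `(M/I^{[pⁿ]}M)_j = 0` for `j ≥ Lpⁿ` and `g_n` vanishes off
`[0, L]`. The bound on the values of `g_n` is read off its convergence at the single point
`x = 1/p`: for a proper ideal `I`, the submodule `I^{[pⁿ]}M` has nothing in degrees below `pⁿ`, so
this convergence bounds `dim M_j / j^{d-1}` along `j = p^{n-1}`. Since `dim M_j` is eventually a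
polynomial in `j`, it is `O(j^{d-1})`.
-/

open Filter Complex MeasureTheory

noncomputable section

/-- The Frobenius bracket power `I^{[q]}` of an ideal. -/
def bracketPow {R : Type*} [CommSemiring R] (I : Ideal R) (q : ℕ) : Ideal R :=
  Ideal.span ((fun x : R => x ^ q) '' (I : Set R))

/-- `λ_k((M/N)_j)`. -/
def quotPieceDim (k : Type*) {R M : Type*} [Field k] [CommRing R] [Algebra k R]
    [AddCommGroup M] [Module R M] [Module k M] [IsScalarTower k R M]
    (ℳ : ℤ → Submodule k M) (N : Submodule R M) (j : ℤ) : ℕ :=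
  Module.finrank k ((ℳ j).map (N.mkQ.restrictScalars k))

/-- `F_n(M,R,I,d)(y)`. -/
def FnGen (k : Type*) {R M : Type*} [Field k] [CommRing R] [Algebra k R]
    [AddCommGroup M] [Module R M] [Module k M] [IsScalarTower k R M]
    (ℳ : ℤ → Submodule k M) (I : Ideal R) (p d n : ℕ) (y : ℂ) : ℂ :=
  (1 / (p : ℂ) ^ n) ^ d *
    ∑' j : ℤ, (quotPieceDim k (R := R) ℳ (bracketPow I (p ^ n) • ⊤) j : ℂ) *
      Complex.exp (-Complex.I * y * (j : ℂ) / (p : ℂ) ^ n)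

section RiemannSum

variable {E : Type*} [NormedAddCommGroup E] [NormedSpace ℝ E]

lemma map_floor_volume : (volume : Measure ℝ).map Int.floor = (Measure.count : Measure ℤ) := by
  refine Measure.ext_of_singleton fun j => ?_
  rw [Measure.map_apply Int.measurable_floor (measurableSet_singleton j),
    Int.preimage_floor_singleton, Real.volume_Ico, Measure.count_singleton]
  simp

lemma integral_comp_floor [CompleteSpace E] {φ : ℤ → E} (hφ : Summable fun j => ‖φ j‖) :
    ∫ x : ℝ, φ ⌊x⌋ = ∑' j, φ j := by
  rw [← integral_map (φ := Int.floor) Int.measurable_floor.aemeasurable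
    (StronglyMeasurable.of_discrete (f := φ)).aestronglyMeasurable, map_floor_volume,
    integral_countable (integrable_count_iff.2 hφ)]
  simp only [measureReal_def, Measure.count_singleton, ENNReal.toReal_one, one_smul]

lemma integral_comp_floor_mul [CompleteSpace E] {φ : ℤ → E} (hφ : Summable fun j => ‖φ j‖)
    {q : ℝ} (hq : 0 < q) : ∫ x : ℝ, φ ⌊x * q⌋ = q⁻¹ • ∑' j, φ j := by
  rw [Measure.integral_comp_mul_right (fun x => φ ⌊x⌋) q, integral_comp_floor hφ,
    abs_of_pos (inv_pos.2 hq)]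

lemma abs_floor_mul_div_sub_le (x : ℝ) {q : ℝ} (hq : 0 < q) : |⌊x * q⌋ / q - x| ≤ q⁻¹ := by
  have hfloor : |⌊x * q⌋ - x * q| ≤ 1 := by
    rw [abs_sub_comm, Int.self_sub_floor, Int.abs_fract]
    exact (Int.fract_lt_one _).le
  rw [div_sub' hq.ne', abs_div, abs_of_pos hq, inv_eq_one_div, mul_comm q x]
  gcongr

lemma tendsto_floor_mul_div {q : ℕ → ℝ} (hq : Tendsto q atTop atTop) (x : ℝ) :
    Tendsto (fun n => ⌊x * q n⌋ / q n) atTop (nhds x) := by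
  rw [tendsto_iff_norm_sub_tendsto_zero]
  refine squeeze_zero' (.of_forall fun _ => norm_nonneg _) ?_ (tendsto_inv_atTop_zero.comp hq)
  filter_upwards [hq.eventually_gt_atTop 0] with n hn
  exact abs_floor_mul_div_sub_le x hn

/-- The step function of mesh `1 / q` attached to the values `u j` at the lattice points `j / q`,
weighted by `w`; its integral is the Riemann sum `q⁻¹ • ∑' j, u j • w (j / q)`. -/
def stepFun (u : ℤ → ℝ) (w : ℝ → E) (q x : ℝ) : E :=
  u ⌊x * q⌋ • w (⌊x * q⌋ / q)

lemma stronglyMeasurable_stepFun (u : ℤ → ℝ) (w : ℝ → E) (q : ℝ) :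
    StronglyMeasurable (stepFun u w q) :=
  (StronglyMeasurable.of_discrete (f := fun j : ℤ => u j • w (j / q))).comp_measurable
    (Int.measurable_floor.comp (measurable_id.mul_const q))

lemma integral_stepFun [CompleteSpace E] {u : ℤ → ℝ} (hu : u.HasFiniteSupport) (w : ℝ → E)
    {q : ℝ} (hq : 0 < q) :
    ∫ x, stepFun u w q x = q⁻¹ • ∑' j, u j • w (j / q) := by
  refine integral_comp_floor_mul (φ := fun j => u j • w (j / q)) ?_ hq
  refine summable_of_hasFiniteSupport (hu.subset fun j hj => ?_)
  contrapose! hj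
  simp_all

lemma norm_stepFun_le {u : ℤ → ℝ} {w : ℝ → E} {q L C W : ℝ} (hq : 1 ≤ q) (hW₀ : 0 ≤ W)
    (hu : ∀ j : ℤ, |u j| ≤ C) (hsupp : ∀ j : ℤ, L * q < |(j : ℝ)| → u j = 0)
    (hW : ∀ t ∈ Set.Icc (-L) L, ‖w t‖ ≤ W) (x : ℝ) :
    ‖stepFun u w q x‖ ≤ (Set.Icc (-(L + 1)) (L + 1)).indicator (fun _ => C * W) x := by
  have hq₀ : 0 < q := one_pos.trans_le hq
  have hC₀ : 0 ≤ C := (abs_nonneg _).trans (hu 0)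
  rcases lt_or_ge (L * q) |⌊x * q⌋| with hfar | hnear
  · rw [stepFun, hsupp _ hfar, zero_smul, norm_zero]
    exact Set.indicator_nonneg (fun _ _ => by positivity) x
  · have hnode : |⌊x * q⌋ / q| ≤ L := by
      rwa [abs_div, abs_of_pos hq₀, div_le_iff₀ hq₀]
    have hx : |x| ≤ L + 1 := by
      have hdist := (abs_floor_mul_div_sub_le x hq₀).trans (inv_le_one_of_one_le₀ hq)
      linarith [abs_sub_abs_le_abs_sub x (⌊x * q⌋ / q), abs_sub_comm x (⌊x * q⌋ / q)]
    rw [Set.indicator_of_mem (Set.mem_Icc.2 (abs_le.1 hx)), stepFun, norm_smul, Real.norm_eq_abs]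
    exact mul_le_mul (hu _) (hW _ (abs_le.1 hnode)) (norm_nonneg _) hC₀

lemma hasFiniteSupport_of_eq_zero_of_lt_abs {u : ℤ → ℝ} {B : ℝ}
    (hu : ∀ j : ℤ, B < |(j : ℝ)| → u j = 0) :
    u.HasFiniteSupport := by
  refine (Set.finite_Icc (-⌊B⌋) ⌊B⌋).subset fun j hj => abs_le.1 (Int.le_floor.2 ?_)
  rw [Int.cast_abs]
  by_contra! hlt
  exact hj (hu j hlt)

theorem integrable_and_tendsto_riemannSum [CompleteSpace E] {q : ℕ → ℝ} {u : ℕ → ℤ → ℝ}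
    {g : ℝ → ℝ} {w : ℝ → E} {L C : ℝ} (hw : Continuous w) (hq : ∀ n, 1 ≤ q n)
    (hq_top : Tendsto q atTop atTop) (hu : ∀ n j, |u n j| ≤ C)
    (hsupp : ∀ n (j : ℤ), L * q n < |(j : ℝ)| → u n j = 0)
    (hlim : ∀ x, Tendsto (fun n => u n ⌊x * q n⌋) atTop (nhds (g x))) :
    Integrable (fun x => g x • w x) ∧
      Tendsto (fun n => (q n)⁻¹ • ∑' j, u n j • w (j / q n)) atTop (nhds (∫ x, g x • w x)) := by
  obtain ⟨W, hW⟩ :=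
    isCompact_Icc.exists_bound_of_continuousOn (hw.continuousOn (s := Set.Icc (-L) L))
  let bound : ℝ → ℝ := (Set.Icc (-(L + 1)) (L + 1)).indicator fun _ => C * |W|
  have hbound (n : ℕ) (x : ℝ) : ‖stepFun (u n) w (q n) x‖ ≤ bound x :=
    norm_stepFun_le (hq n) (abs_nonneg W) (hu n) (hsupp n)
      (fun t ht => (hW t ht).trans (le_abs_self W)) x
  have hbound_int : Integrable bound :=
    (integrableOn_const measure_Icc_lt_top.ne).integrable_indicator measurableSet_Icc
  have hmeas (n : ℕ) : AEStronglyMeasurable (stepFun (u n) w (q n)) :=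
    (stronglyMeasurable_stepFun _ _ _).aestronglyMeasurable
  have hstep (x : ℝ) : Tendsto (fun n => stepFun (u n) w (q n) x) atTop (nhds (g x • w x)) :=
    (hlim x).smul ((hw.tendsto x).comp (tendsto_floor_mul_div hq_top x))
  constructor
  · refine hbound_int.mono' (aestronglyMeasurable_of_tendsto_ae atTop hmeas (.of_forall hstep)) ?_
    exact .of_forall fun x => le_of_tendsto' (hstep x).norm fun n => hbound n x
  · refine (tendsto_integral_of_dominated_convergence bound hmeas hbound_int
      (fun n => .of_forall (hbound n)) (.of_forall hstep)).congr fun n => ?_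
    exact integral_stepFun (hasFiniteSupport_of_eq_zero_of_lt_abs (hsupp n)) w
      (one_pos.trans_le (hq n))

lemma one_div_pow_mul_le {f : ℤ → ℝ} {q C : ℝ} {L e : ℕ} (hq : 1 ≤ q) (hC : 0 ≤ C)
    (hneg : ∀ j < 0, f j = 0) (hL : ∀ j : ℤ, L * q ≤ j → f j = 0)
    (hle : ∀ n : ℕ, f n ≤ C * ((n : ℝ) + 1) ^ e) (j : ℤ) :
    (1 / q) ^ e * f j ≤ C * ((L : ℝ) + 1) ^ e := by
  have hzero (hj : f j = 0) : (1 / q) ^ e * f j ≤ C * ((L : ℝ) + 1) ^ e := by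
    rw [hj, mul_zero]
    positivity
  rcases lt_or_ge j 0 with hj | hj
  · exact hzero (hneg j hj)
  lift j to ℕ using hj
  rcases le_or_gt (L * q) j with hLj | hjL
  · exact hzero (hL j (by exact_mod_cast hLj))
  rw [one_div, inv_pow, inv_mul_le_iff₀ (by positivity)]
  calc f j ≤ C * ((j : ℝ) + 1) ^ e := hle j
    _ ≤ C * (q * ((L : ℝ) + 1)) ^ e := by
      gcongr
      linarith
    _ = q ^ e * (C * ((L : ℝ) + 1) ^ e) := by rw [mul_pow]; ring

lemma integrable_and_tendsto_riemannSum_of_le_pow [CompleteSpace E] {q : ℕ → ℝ} {f : ℕ → ℤ → ℝ}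
    {g : ℝ → ℝ} {w : ℝ → E} {C : ℝ} {L e : ℕ} (hw : Continuous w) (hq : ∀ n, 1 ≤ q n)
    (hq_top : Tendsto q atTop atTop) (hf : ∀ n j, 0 ≤ f n j) (hneg : ∀ n, ∀ j < 0, f n j = 0)
    (hL : ∀ n, ∀ j : ℤ, L * q n ≤ j → f n j = 0)
    (hle : ∀ n, ∀ j : ℕ, f n j ≤ C * ((j : ℝ) + 1) ^ e)
    (hlim : ∀ x, Tendsto (fun n => (1 / q n) ^ e * f n ⌊x * q n⌋) atTop (nhds (g x))) :
    Integrable (fun x => g x • w x) ∧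
      Tendsto (fun n => (q n)⁻¹ • ∑' j : ℤ, ((1 / q n) ^ e * f n j) • w (j / q n)) atTop
        (nhds (∫ x, g x • w x)) := by
  have hC : 0 ≤ C := by simpa using (hf 0 0).trans (hle 0 0)
  have hinv (n : ℕ) : 0 ≤ 1 / q n := one_div_nonneg.2 (zero_le_one.trans (hq n))
  refine integrable_and_tendsto_riemannSum (L := L) (C := C * ((L : ℝ) + 1) ^ e)
    (u := fun n j => (1 / q n) ^ e * f n j) hw hq hq_top (fun n j => ?_) (fun n j hj => ?_) hlim
  · rw [abs_of_nonneg (mul_nonneg (pow_nonneg (hinv n) e) (hf n j))]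
    exact one_div_pow_mul_le (hq n) hC (hneg n) (hL n) (hle n) j
  · rcases lt_or_ge j 0 with hj0 | hj0
    · rw [hneg n j hj0, mul_zero]
    · rw [abs_of_nonneg (by exact_mod_cast hj0)] at hj
      rw [hL n j hj.le, mul_zero]

end RiemannSum

section Growth

lemma degree_le_of_frequently_abs_eval_le {P : Polynomial ℝ} {B : ℝ} {e : ℕ}
    (h : ∃ᶠ x in atTop, |P.eval x| ≤ B * x ^ e) : P.degree ≤ e := by
  contrapose! h
  have hlim := Polynomial.abs_div_tendsto_atTop_atTop_of_degree_gt P (Polynomial.X ^ e)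
    (by rwa [Polynomial.degree_X_pow]) (pow_ne_zero e Polynomial.X_ne_zero)
  filter_upwards [hlim.eventually_gt_atTop B, eventually_gt_atTop 0] with x hB hx
  rwa [Polynomial.eval_pow, Polynomial.eval_X, abs_div, abs_of_pos (pow_pos hx e),
    lt_div_iff₀ (pow_pos hx e)] at hB

lemma exists_le_mul_pow_of_eventually_eq_eval {f : ℕ → ℝ} {P : Polynomial ℝ} {B : ℝ} {e : ℕ}
    (hf : ∀ n, 0 ≤ f n) (hP : ∀ᶠ n : ℕ in atTop, f n = P.eval (n : ℝ))
    (hB : ∃ᶠ n : ℕ in atTop, f n ≤ B * (n : ℝ) ^ e) :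
    ∃ C : ℝ, ∀ n : ℕ, f n ≤ C * ((n : ℝ) + 1) ^ e := by
  have hdeg : P.degree ≤ e := by
    refine degree_le_of_frequently_abs_eval_le (B := B)
      (tendsto_natCast_atTop_atTop.frequently ((hB.and_eventually hP).mono fun n hn => ?_))
    rw [← hn.2, abs_of_nonneg (hf n)]
    exact hn.1
  have hPO : (fun n : ℕ => P.eval (n : ℝ)) =O[atTop] fun n : ℕ => (n : ℝ) ^ e := by
    simpa [Function.comp_def] using (P.isBigO_atTop_of_degree_le (Polynomial.X ^ e)
      (by rwa [Polynomial.degree_X_pow])).comp_tendsto (tendsto_natCast_atTop_atTop (R := ℝ))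
  have hshift : (fun n : ℕ => (n : ℝ) ^ e) =O[atTop] fun n : ℕ => ((n : ℝ) + 1) ^ e :=
    .of_norm_le fun n => by
      rw [norm_pow, Real.norm_of_nonneg n.cast_nonneg]
      gcongr
      linarith
  obtain ⟨C, -, hle⟩ := Asymptotics.bound_of_isBigO_nat_atTop
    ((hPO.congr' (hP.mono fun n hn => hn.symm) .rfl).trans hshift)
  refine ⟨C, fun n => ?_⟩
  have hpos : 0 < ((n : ℝ) + 1) ^ e := by positivity
  simpa only [Real.norm_of_nonneg (hf n), Real.norm_of_nonneg hpos.le] using hle hpos.ne'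

end Growth

section GradedProj

variable {ι k M : Type*} [DecidableEq ι] [Semiring k] [AddCommMonoid M] [Module k M]
  (ℳ : ι → Submodule k M) [DirectSum.Decomposition ℳ]

/-- The `k`-linear projection of a graded module onto its component of degree `i`
(`GradedRing.proj` covers only the ring itself). -/
def gradedProj (i : ι) : M →ₗ[k] M :=
  (ℳ i).subtype ∘ₗ DirectSum.component k ι (fun i => ℳ i) i ∘ₗ
    (DirectSum.decomposeLinearEquiv ℳ).toLinearMap

lemma gradedProj_mem (i : ι) (m : M) : gradedProj ℳ i m ∈ ℳ i :=
  (DirectSum.decompose ℳ m i).2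

variable {ℳ}

lemma gradedProj_of_mem {i : ι} {m : M} (hm : m ∈ ℳ i) : gradedProj ℳ i m = m :=
  DirectSum.decompose_of_mem_same ℳ hm

lemma gradedProj_of_mem_ne {i j : ι} {m : M} (hm : m ∈ ℳ i) (hij : i ≠ j) :
    gradedProj ℳ j m = 0 :=
  DirectSum.decompose_of_mem_ne ℳ hm hij

variable (ℳ) in
lemma eventually_gradedProj_eq_zero (m : M) : ∀ᶠ i in cofinite, gradedProj ℳ i m = 0 := by
  classical
  refine (DirectSum.decompose ℳ m).support.finite_toSet.subset fun i hi => ?_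
  contrapose! hi
  rw [Finset.mem_coe, DFinsupp.notMem_support_iff] at hi
  exact Set.notMem_compl_iff.2 (congrArg Subtype.val hi)

lemma gradedProj_smul {ι k R M : Type*} [DecidableEq ι] [AddLeftCancelSemigroup ι] [Semiring k]
    [Semiring R] [Module k R] [AddCommMonoid M] [Module R M] [Module k M]
    (𝒜 : ι → Submodule k R) (ℳ : ι → Submodule k M) [DirectSum.Decomposition ℳ]
    [SetLike.GradedSMul 𝒜 ℳ] {i : ι} {x : R} (hx : x ∈ 𝒜 i) (j : ι) (m : M) :
    gradedProj ℳ (i + j) (x • m) = x • gradedProj ℳ j m := by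
  induction m using DirectSum.Decomposition.inductionOn ℳ with
  | zero => simp only [smul_zero, map_zero]
  | @homogeneous j' m =>
    have hxm : x • (m : M) ∈ ℳ (i + j') := SetLike.GradedSMul.smul_mem hx m.2
    by_cases h : j' = j
    · subst h
      rw [gradedProj_of_mem m.2, gradedProj_of_mem hxm]
    · rw [gradedProj_of_mem_ne m.2 h, gradedProj_of_mem_ne hxm (by simpa using h), smul_zero]
  | add m m' hm hm' => rw [smul_add, map_add, map_add, hm, hm', smul_add]

end GradedProj

section HomogeneousSubmodule

variable {k R M : Type*} [CommRing k] [CommRing R] [Algebra k R] [AddCommGroup M] [Module R M]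
  [Module k M] {𝒜 : ℤ → Submodule k R} {ℳ : ℤ → Submodule k M} [DirectSum.Decomposition ℳ]

lemma gradedProj_mem_of_mem_span_smul [SetLike.GradedSMul 𝒜 ℳ] {i : ℤ} {X : Set R}
    (hX : ∀ x ∈ X, x ∈ 𝒜 i) {N : Submodule R M} {P : Submodule k M} {j : ℤ}
    (hP : ∀ x ∈ X, ∀ n ∈ N, x • gradedProj ℳ j n ∈ P) {m : M} (hm : m ∈ Ideal.span X • N) :
    gradedProj ℳ (i + j) m ∈ P := by
  have hspan : ∀ r ∈ Ideal.span X, ∀ n ∈ N, gradedProj ℳ (i + j) (r • n) ∈ P := by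
    intro r hr
    induction hr using Submodule.span_induction with
    | mem x hx => exact fun n hn => gradedProj_smul 𝒜 ℳ (hX x hx) j n ▸ hP x hx n hn
    | zero => exact fun n _ => by simp only [zero_smul, map_zero, zero_mem]
    | add r r' _ _ hr hr' =>
      exact fun n hn => by simpa only [add_smul, map_add] using add_mem (hr n hn) (hr' n hn)
    | smul s r _ hr =>
      exact fun n hn => by
        simpa only [smul_eq_mul, mul_comm s, mul_smul] using hr _ (N.smul_mem s hn)
  exact Submodule.smul_induction_on hm hspan fun m m' hm hm' => by
    simpa only [map_add] using add_mem hm hm'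

lemma gradedProj_eq_zero_of_mem_pow_smul_top [SetLike.GradedSMul 𝒜 ℳ] (hneg : ∀ j < 0, ℳ j = ⊥)
    {X : Set R} (hX : ∀ x ∈ X, x ∈ 𝒜 1) {q : ℕ} {j : ℤ} (hj : j < q) {m : M}
    (hm : m ∈ Ideal.span X ^ q • (⊤ : Submodule R M)) :
    gradedProj ℳ j m = 0 := by
  induction q generalizing j m with
  | zero => exact (Submodule.eq_bot_iff _).1 (hneg j (by lia)) _ (gradedProj_mem ℳ j m)
  | succ q ih =>
    rw [pow_succ', Submodule.mul_smul] at hm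
    rw [← Submodule.mem_bot k, ← add_sub_cancel 1 j]
    refine gradedProj_mem_of_mem_span_smul hX (fun x _ n hn => ?_) hm
    rw [ih (by lia) hn, smul_zero]
    exact zero_mem _

lemma isHomogeneous_inf_comap_lsmul [SetLike.GradedSMul 𝒜 ℳ] {N N' : Submodule R M} {i : ℤ} {a : R}
    (hN : N.IsHomogeneous ℳ) (hN' : N'.IsHomogeneous ℳ) (ha : a ∈ 𝒜 i) :
    (N ⊓ N'.comap (LinearMap.lsmul R M a)).IsHomogeneous ℳ := by
  rintro j m ⟨hm, ham⟩
  have hproj : a • gradedProj ℳ j m ∈ N' := gradedProj_smul 𝒜 ℳ ha j m ▸ hN' (i + j) ham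
  exact ⟨hN j hm, hproj⟩

lemma isHomogeneous_map_lsmul_sup [SetLike.GradedSMul 𝒜 ℳ] {N N' : Submodule R M} {i : ℤ} {a : R}
    (hN : N.IsHomogeneous ℳ) (hN' : N'.IsHomogeneous ℳ) (ha : a ∈ 𝒜 i) :
    (N.map (LinearMap.lsmul R M a) ⊔ N').IsHomogeneous ℳ := by
  intro j m hm
  obtain ⟨_, ⟨n, hn, rfl⟩, n', hn', rfl⟩ := Submodule.mem_sup.1 hm
  have hproj : gradedProj ℳ j (a • n + n') = a • gradedProj ℳ (-i + j) n + gradedProj ℳ j n' := by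
    rw [map_add, ← gradedProj_smul 𝒜 ℳ ha, add_neg_cancel_left]
  change gradedProj ℳ j (a • n + n') ∈ _
  rw [hproj]
  exact Submodule.add_mem_sup (Submodule.mem_map_of_mem (hN _ hn)) (hN' j hn')

end HomogeneousSubmodule

section GradedPiece

variable {k R M : Type*} [CommRing k] [CommRing R] [Algebra k R] [AddCommGroup M] [Module R M]
  [Module k M] [IsScalarTower k R M] {𝒜 : ℤ → Submodule k R} {ℳ : ℤ → Submodule k M}

lemma exists_mem_span_sub_mem_smul {𝔪 : Ideal R}
    (h𝔪 : Function.Surjective (algebraMap k (R ⧸ 𝔪))) {T : Set M} {m : M}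
    (hm : m ∈ Submodule.span R T) :
    ∃ a ∈ Submodule.span k T, m - a ∈ 𝔪 • Submodule.span R T := by
  induction hm using Submodule.span_induction with
  | mem t ht => exact ⟨t, Submodule.subset_span ht, by simp⟩
  | zero => exact ⟨0, zero_mem _, by simp⟩
  | add m m' _ _ hm hm' =>
    obtain ⟨a, ha, hma⟩ := hm
    obtain ⟨a', ha', hma'⟩ := hm'
    exact ⟨a + a', add_mem ha ha', by simpa only [add_sub_add_comm] using add_mem hma hma'⟩
  | smul r m hm ih =>
    obtain ⟨a, ha, hma⟩ := ih
    obtain ⟨c, hc⟩ := h𝔪 (Ideal.Quotient.mk 𝔪 r)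
    have hrc : r - algebraMap k R c ∈ 𝔪 := Ideal.Quotient.mk_eq_mk_iff_sub_mem _ _ |>.1 hc.symm
    refine ⟨c • a, Submodule.smul_mem _ _ ha, ?_⟩
    have hsplit : r • m - c • a = (r - algebraMap k R c) • m + algebraMap k R c • (m - a) := by
      rw [sub_smul, smul_sub, algebraMap_smul, algebraMap_smul]
      abel
    rw [hsplit]
    exact add_mem (Submodule.smul_mem_smul hrc hm) (Submodule.smul_mem _ _ hma)

variable (ℳ) in
/-- The degree-`j` piece of a homogeneous submodule `N`, as a `k`-subspace of the ambient
module. -/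
def gradedPiece (N : Submodule R M) (j : ℤ) : Submodule k M :=
  N.restrictScalars k ⊓ ℳ j

lemma gradedPiece_inf_comap_lsmul [SetLike.GradedSMul 𝒜 ℳ] (N N' : Submodule R M) {i : ℤ} {a : R}
    (ha : a ∈ 𝒜 i) (j : ℤ) :
    gradedPiece ℳ (N ⊓ N'.comap (LinearMap.lsmul R M a)) j =
      gradedPiece ℳ N j ⊓ (gradedPiece ℳ N' (i + j)).comap (Algebra.lsmul k k M a) := by
  ext m
  have hdeg (hm : m ∈ ℳ j) : a • m ∈ ℳ (i + j) := SetLike.GradedSMul.smul_mem ha hm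
  simp only [gradedPiece, Submodule.mem_inf, Submodule.restrictScalars_mem, Submodule.mem_comap,
    LinearMap.lsmul_apply, Algebra.lsmul_coe]
  tauto

variable [DirectSum.Decomposition ℳ]

lemma gradedProj_mem_gradedPiece {N : Submodule R M} (hN : N.IsHomogeneous ℳ) (j : ℤ) {m : M}
    (hm : m ∈ N) : gradedProj ℳ j m ∈ gradedPiece ℳ N j :=
  ⟨hN j hm, gradedProj_mem ℳ j m⟩

/-- A graded form of Nakayama's lemma: if `R = k + (X)` with `X` of degree one, a homogeneous
submodule with generators `T` is spanned in degree `1 + j` by the products of `X` with its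
degree-`j` piece and the degree-`(1 + j)` components of `T`. -/
lemma gradedPiece_add_one_le [SetLike.GradedSMul 𝒜 ℳ] {X : Set R} (hX : ∀ x ∈ X, x ∈ 𝒜 1)
    (hkX : Function.Surjective (algebraMap k (R ⧸ Ideal.span X))) {N : Submodule R M}
    (hN : N.IsHomogeneous ℳ) {T : Set M} (hT : Submodule.span R T = N) {j : ℤ}
    {P : Submodule k M} (hXP : ∀ x ∈ X, ∀ n ∈ gradedPiece ℳ N j, x • n ∈ P)
    (hTP : ∀ t ∈ T, gradedProj ℳ (1 + j) t ∈ P) : gradedPiece ℳ N (1 + j) ≤ P := by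
  rintro m ⟨hmN, hmj⟩
  obtain ⟨a, ha, hma⟩ := exists_mem_span_sub_mem_smul hkX (hT ▸ hmN)
  have haP : gradedProj ℳ (1 + j) a ∈ P :=
    (Submodule.span_le (p := P.comap (gradedProj ℳ (1 + j)))).2 hTP ha
  have hmaP : gradedProj ℳ (1 + j) (m - a) ∈ P :=
    gradedProj_mem_of_mem_span_smul hX
      (fun x hx n hn => hXP x hx _ (gradedProj_mem_gradedPiece hN j hn)) (hT ▸ hma)
  have hsum := add_mem hmaP haP
  rwa [← map_add, sub_add_cancel, gradedProj_of_mem hmj] at hsum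

lemma eventually_gradedPiece_add_one_le [SetLike.GradedSMul 𝒜 ℳ] {X : Set R}
    (hX : ∀ x ∈ X, x ∈ 𝒜 1) (hkX : Function.Surjective (algebraMap k (R ⧸ Ideal.span X)))
    {N : Submodule R M} (hN : N.IsHomogeneous ℳ) (hNfg : N.FG) :
    ∀ᶠ j in atTop, ∀ P : Submodule k M,
      (∀ x ∈ X, ∀ n ∈ gradedPiece ℳ N j, x • n ∈ P) → gradedPiece ℳ N (1 + j) ≤ P := by
  obtain ⟨T, hT⟩ := hNfg
  have hTproj : ∀ᶠ j in atTop, ∀ t ∈ T, gradedProj ℳ (1 + j) t = 0 :=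
    (eventually_all_finset T).2 fun t _ =>
      (tendsto_atTop_add_const_left atTop 1 tendsto_id).eventually
        (atTop_le_cofinite (eventually_gradedProj_eq_zero ℳ t))
  filter_upwards [hTproj] with j hj P hP
  exact gradedPiece_add_one_le hX hkX hN hT hP fun t ht => (hj t ht).symm ▸ P.zero_mem

lemma gradedPiece_map_lsmul_sup [SetLike.GradedSMul 𝒜 ℳ] {N N' : Submodule R M} {i : ℤ} {a : R}
    (hN : N.IsHomogeneous ℳ) (hN' : N'.IsHomogeneous ℳ) (ha : a ∈ 𝒜 i) (j : ℤ) :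
    gradedPiece ℳ (N.map (LinearMap.lsmul R M a) ⊔ N') (i + j) =
      (gradedPiece ℳ N j).map (Algebra.lsmul k k M a) ⊔ gradedPiece ℳ N' (i + j) := by
  apply le_antisymm
  · rintro m ⟨hm, hmj⟩
    obtain ⟨_, ⟨n, hn, rfl⟩, n', hn', rfl⟩ := Submodule.mem_sup.1 hm
    have hproj : a • n + n' = a • gradedProj ℳ j n + gradedProj ℳ (i + j) n' := by
      rw [← gradedProj_smul 𝒜 ℳ ha, ← map_add]
      exact (gradedProj_of_mem hmj).symm
    rw [LinearMap.lsmul_apply, hproj]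
    exact Submodule.add_mem_sup (Submodule.mem_map_of_mem (gradedProj_mem_gradedPiece hN j hn))
      (gradedProj_mem_gradedPiece hN' _ hn')
  · refine sup_le ?_ fun n hn => ⟨Submodule.mem_sup_right hn.1, hn.2⟩
    rintro _ ⟨n, hn, rfl⟩
    exact ⟨Submodule.mem_sup_left (Submodule.mem_map_of_mem hn.1),
      SetLike.GradedSMul.smul_mem ha hn.2⟩

lemma exists_le_pow_smul_top [Module.Finite R M] [SetLike.GradedSMul 𝒜 ℳ] {X : Set R}
    (hX : ∀ x ∈ X, x ∈ 𝒜 1) (hkX : Function.Surjective (algebraMap k (R ⧸ Ideal.span X))) :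
    ∃ D : ℤ, ∀ (t : ℕ) (j : ℤ), D + t ≤ j →
      ℳ j ≤ (Ideal.span X ^ t • (⊤ : Submodule R M)).restrictScalars k := by
  obtain ⟨D, hD⟩ := eventually_atTop.1 (eventually_gradedPiece_add_one_le (ℳ := ℳ) hX hkX
    (N := (⊤ : Submodule R M)) (fun _ _ _ => Submodule.mem_top) Module.Finite.fg_top)
  refine ⟨D, fun t => ?_⟩
  induction t with
  | zero => exact fun j _ m _ => by simp
  | succ t ih =>
    intro j hj m hm
    push_cast at hj
    rw [← add_sub_cancel 1 j] at hm
    refine hD (j - 1) (by lia) _ (fun x hx n hn => ?_) ⟨Submodule.mem_top, hm⟩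
    rw [Submodule.restrictScalars_mem, pow_succ', Submodule.mul_smul]
    exact Submodule.smul_mem_smul (Ideal.subset_span hx) (ih (j - 1) (by lia) hn.2)

end GradedPiece

section HilbertSeries

lemma finrank_add_finrank_eq_comap_add_map_sup {k V W : Type*} [DivisionRing k] [AddCommGroup V]
    [Module k V] [AddCommGroup W] [Module k W] (L : V →ₗ[k] W) (A : Submodule k V)
    (B : Submodule k W) [FiniteDimensional k A] [FiniteDimensional k B] :
    Module.finrank k A + Module.finrank k B =
      Module.finrank k ↥(A ⊓ B.comap L) + Module.finrank k ↥(A.map L ⊔ B) := by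
  have hrank (C : Submodule k V) [FiniteDimensional k C] :
      Module.finrank k (C.map L) + Module.finrank k ↥(C ⊓ LinearMap.ker L) =
        Module.finrank k C := by
    rw [← (L.domRestrict C).finrank_range_add_finrank_ker, LinearMap.range_domRestrict,
      LinearMap.ker_domRestrict, ← Submodule.finrank_map_subtype_eq, Submodule.map_comap_subtype]
  have hker : A ⊓ B.comap L ⊓ LinearMap.ker L = A ⊓ LinearMap.ker L := by
    rw [inf_assoc, inf_eq_right.2 (LinearMap.ker_le_comap L)]
  have hcomap := hrank (A ⊓ B.comap L)
  rw [hker, ← Submodule.map_inf_eq_map_inf_comap] at hcomap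
  have := Submodule.finrank_sup_add_finrank_inf_eq (A.map L) B
  have := hrank A
  lia

variable {k R M : Type*} [Field k] [CommRing R] [Algebra k R] [AddCommGroup M] [Module R M]
  [Module k M] [IsScalarTower k R M] {𝒜 : ℤ → Submodule k R} {ℳ : ℤ → Submodule k M}

variable (ℳ) in
/-- The Hilbert series `∑ (dim_k N_n) Xⁿ` of a homogeneous submodule; real coefficients are used
since the Hilbert polynomials in Mathlib live over a field of characteristic zero. -/
def hilbertSeries (N : Submodule R M) : PowerSeries ℝ :=
  PowerSeries.mk fun n => (Module.finrank k (gradedPiece ℳ N n) : ℝ)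

lemma hilbertSeries_bot : hilbertSeries ℳ (⊥ : Submodule R M) = 0 := by
  ext n
  have hbot : gradedPiece ℳ (⊥ : Submodule R M) n = ⊥ := by
    rw [gradedPiece, Submodule.restrictScalars_bot, bot_inf_eq]
  rw [hilbertSeries, PowerSeries.coeff_mk, hbot, finrank_bot, Nat.cast_zero, map_zero]

variable [DirectSum.Decomposition ℳ]

lemma finiteDimensional_of_gradedSMul [Module.Finite R M] [SetLike.GradedSMul 𝒜 ℳ] {X : Finset R}
    (hX : ∀ x ∈ X, x ∈ 𝒜 1)
    (hkX : Function.Surjective (algebraMap k (R ⧸ Ideal.span (X : Set R))))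
    (hneg : ∀ j < 0, ℳ j = ⊥) (j : ℤ) : FiniteDimensional k (ℳ j) := by
  rcases lt_or_ge j (-1) with hj | hj
  · rw [hneg j (by lia)]
    infer_instance
  induction j, hj using Int.leInduction with
  | base => rw [hneg (-1) (by lia)]; infer_instance
  | succ j _ ih =>
    obtain ⟨T, hT⟩ := Module.Finite.fg_top (R := R) (M := M)
    let P : Submodule k M := (⨆ x : X, (ℳ j).map (Algebra.lsmul k k M (x : R))) ⊔
      (Submodule.span k (T : Set M)).map (gradedProj ℳ (1 + j))
    have hle : gradedPiece ℳ (⊤ : Submodule R M) (1 + j) ≤ P := by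
      refine gradedPiece_add_one_le hX hkX (fun _ _ _ => Submodule.mem_top) hT ?_ ?_
      · exact fun x hx n hn => Submodule.mem_sup_left
          (Submodule.mem_iSup_of_mem ⟨x, hx⟩ (Submodule.mem_map_of_mem hn.2))
      · exact fun t ht => Submodule.mem_sup_right
          (Submodule.mem_map_of_mem (Submodule.subset_span ht))
    rw [add_comm j 1]
    exact Submodule.finiteDimensional_of_le (fun m hm => hle ⟨Submodule.mem_top, hm⟩ : _ ≤ P)

lemma finrank_gradedPiece_add [SetLike.GradedSMul 𝒜 ℳ] [∀ j, FiniteDimensional k (ℳ j)]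
    {N N' : Submodule R M} (hN : N.IsHomogeneous ℳ) (hN' : N'.IsHomogeneous ℳ) {i j l : ℤ}
    (hl : i + j = l) {a : R} (ha : a ∈ 𝒜 i) :
    Module.finrank k (gradedPiece ℳ N j) + Module.finrank k (gradedPiece ℳ N' l) =
      Module.finrank k (gradedPiece ℳ (N ⊓ N'.comap (LinearMap.lsmul R M a)) j) +
        Module.finrank k (gradedPiece ℳ (N.map (LinearMap.lsmul R M a) ⊔ N') l) := by
  have hfin (N : Submodule R M) (j : ℤ) : FiniteDimensional k (gradedPiece ℳ N j) :=
    Submodule.finiteDimensional_of_le (inf_le_right : _ ≤ ℳ j)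
  subst hl
  rw [gradedPiece_inf_comap_lsmul N N' ha, gradedPiece_map_lsmul_sup hN hN' ha]
  exact finrank_add_finrank_eq_comap_add_map_sup _ _ _

open PowerSeries in
lemma one_sub_X_mul_hilbertSeries_sub [SetLike.GradedSMul 𝒜 ℳ] [∀ j, FiniteDimensional k (ℳ j)]
    (hneg : ∀ j < 0, ℳ j = ⊥) {N N' : Submodule R M} (hN : N.IsHomogeneous ℳ)
    (hN' : N'.IsHomogeneous ℳ) {a : R} (ha : a ∈ 𝒜 1) :
    (1 - X) * (hilbertSeries ℳ N - hilbertSeries ℳ N') =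
      (hilbertSeries ℳ N - hilbertSeries ℳ (N.map (LinearMap.lsmul R M a) ⊔ N')) -
        X * (hilbertSeries ℳ (N ⊓ N'.comap (LinearMap.lsmul R M a)) - hilbertSeries ℳ N') := by
  ext n
  rcases n with - | n
  · have hbot (N : Submodule R M) : Module.finrank k (gradedPiece ℳ N (-1)) = 0 := by
      rw [gradedPiece, hneg (-1) (by lia), inf_bot_eq, finrank_bot]
    have hfour := finrank_gradedPiece_add hN hN' (show 1 + (-1) = ((0 : ℕ) : ℤ) by lia) ha
    rw [hbot, hbot, zero_add, zero_add] at hfour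
    simp only [sub_mul, one_mul, map_sub, coeff_zero_X_mul, sub_zero, hilbertSeries, coeff_mk,
      hfour]
  · have hfour := congrArg (Nat.cast (R := ℝ))
      (finrank_gradedPiece_add hN hN' (show 1 + (n : ℤ) = ((n + 1 : ℕ) : ℤ) by lia) ha)
    simp only [sub_mul, one_mul, map_sub, coeff_succ_X_mul, hilbertSeries, coeff_mk]
    push_cast at hfour ⊢
    linarith

lemma eventually_gradedPiece_le_of_smul_le [SetLike.GradedSMul 𝒜 ℳ] {X : Set R}
    (hX : ∀ x ∈ X, x ∈ 𝒜 1) (hkX : Function.Surjective (algebraMap k (R ⧸ Ideal.span X)))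
    {N N' : Submodule R M} (hN : N.IsHomogeneous ℳ) (hNfg : N.FG)
    (hXN : ∀ x ∈ X, ∀ n ∈ N, x • n ∈ N') :
    ∀ᶠ j in atTop, gradedPiece ℳ N j ≤ gradedPiece ℳ N' j := by
  have hshift : Tendsto (fun j : ℤ => j - 1) atTop atTop :=
    tendsto_atTop_add_const_right _ _ tendsto_id
  filter_upwards [hshift.eventually (eventually_gradedPiece_add_one_le hX hkX hN hNfg)] with j hj
  rw [add_sub_cancel] at hj
  exact le_inf (hj _ fun x hx n hn => hXN x hx n hn.1) inf_le_right

lemma exists_polynomial_coe_eq {F : PowerSeries ℝ} (hF : ∀ᶠ n in atTop, F.coeff n = 0) :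
    ∃ P : Polynomial ℝ, (P : PowerSeries ℝ) = F := by
  obtain ⟨D, hD⟩ := eventually_atTop.1 hF
  refine ⟨F.trunc D, ?_⟩
  ext n
  rw [Polynomial.coeff_coe, PowerSeries.coeff_trunc]
  split_ifs with hn
  · rfl
  · exact (hD n (not_lt.1 hn)).symm

/-- The multiplications by the elements of `Y` are removed one at a time. -/
lemma exists_polynomial_eq_hilbertSeries_sub_mul [IsNoetherian R M] [SetLike.GradedSMul 𝒜 ℳ]
    [∀ j, FiniteDimensional k (ℳ j)] (hneg : ∀ j < 0, ℳ j = ⊥) {X : Set R}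
    (hX : ∀ x ∈ X, x ∈ 𝒜 1) (hkX : Function.Surjective (algebraMap k (R ⧸ Ideal.span X)))
    (Y : Finset R) (hYX : ↑Y ⊆ X) {N N' : Submodule R M} (hN : N.IsHomogeneous ℳ)
    (hN' : N'.IsHomogeneous ℳ) (hle : N' ≤ N) (hXN : ∀ x ∈ X, x ∉ Y → ∀ n ∈ N, x • n ∈ N') :
    ∃ P : Polynomial ℝ,
      (P : PowerSeries ℝ) =
        (1 - PowerSeries.X) ^ Y.card * (hilbertSeries ℳ N - hilbertSeries ℳ N') := by
  classical
  induction Y using Finset.induction_on generalizing N N' with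
  | empty =>
    have hge := eventually_gradedPiece_le_of_smul_le hX hkX hN (IsNoetherian.noetherian N)
      fun x hx => hXN x hx (Finset.notMem_empty x)
    refine exists_polynomial_coe_eq ?_
    filter_upwards [tendsto_natCast_atTop_atTop.eventually hge] with n hn
    have hpiece : gradedPiece ℳ N n = gradedPiece ℳ N' n := hn.antisymm (inf_le_inf_right _ hle)
    simp only [Finset.card_empty, pow_zero, one_mul, map_sub, hilbertSeries, PowerSeries.coeff_mk]
    rw [hpiece, sub_self]
  | insert a Y ha ih =>
    have haX : a ∈ X := hYX (Finset.mem_insert_self a Y)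
    have hYX' : ↑Y ⊆ X := fun x hx => hYX (Finset.mem_insert_of_mem hx)
    have hXN' : ∀ x ∈ X, x ∉ Y → x ≠ a → ∀ n ∈ N, x • n ∈ N' := fun x hx hxY hxa =>
      hXN x hx fun h => (Finset.mem_insert.1 h).elim hxa hxY
    have hsup : ∀ x ∈ X, x ∉ Y → ∀ n ∈ N, x • n ∈ N.map (LinearMap.lsmul R M a) ⊔ N' := by
      intro x hx hxY n hn
      rcases eq_or_ne x a with rfl | hxa
      · exact Submodule.mem_sup_left (Submodule.mem_map_of_mem hn)
      · exact Submodule.mem_sup_right (hXN' x hx hxY hxa n hn)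
    have hinf : ∀ x ∈ X, x ∉ Y → ∀ n ∈ N ⊓ N'.comap (LinearMap.lsmul R M a), x • n ∈ N' := by
      intro x hx hxY n hn
      rcases eq_or_ne x a with rfl | hxa
      · exact hn.2
      · exact hXN' x hx hxY hxa n hn.1
    obtain ⟨P, hP⟩ := ih hYX' hN (isHomogeneous_map_lsmul_sup hN hN' (hX a haX))
      (sup_le (Submodule.map_le_iff_le_comap.2 fun n hn => N.smul_mem a hn) hle) hsup
    obtain ⟨Q, hQ⟩ := ih hYX' (isHomogeneous_inf_comap_lsmul hN hN' (hX a haX)) hN'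
      (le_inf hle fun n hn => N'.smul_mem a hn) hinf
    refine ⟨P - .X * Q, ?_⟩
    push_cast
    rw [hP, hQ, Finset.card_insert_of_notMem ha, pow_succ, mul_assoc,
      one_sub_X_mul_hilbertSeries_sub hneg hN hN' (hX a haX)]
    ring

lemma exists_eval_eq_finrank [IsNoetherian R M] [SetLike.GradedSMul 𝒜 ℳ]
    (hneg : ∀ j < 0, ℳ j = ⊥) {X : Finset R} (hX : ∀ x ∈ X, x ∈ 𝒜 1)
    (hkX : Function.Surjective (algebraMap k (R ⧸ Ideal.span (X : Set R)))) :
    ∃ P : Polynomial ℝ, ∀ᶠ n : ℕ in atTop, (Module.finrank k (ℳ n) : ℝ) = P.eval (n : ℝ) := by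
  have (j : ℤ) : FiniteDimensional k (ℳ j) := finiteDimensional_of_gradedSMul hX hkX hneg j
  have hbot : (⊥ : Submodule R M).IsHomogeneous ℳ := by
    rintro j _ rfl
    exact map_zero (gradedProj ℳ j)
  have htop : (⊤ : Submodule R M).IsHomogeneous ℳ := fun _ _ _ => Submodule.mem_top
  obtain ⟨Q, hQ⟩ := exists_polynomial_eq_hilbertSeries_sub_mul hneg (X := (X : Set R)) hX hkX X
    subset_rfl htop hbot bot_le fun x hx hxX => absurd hx hxX
  have hseries : Q * (PowerSeries.invOneSubPow ℝ X.card).val =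
      hilbertSeries ℳ (⊤ : Submodule R M) := by
    rw [hQ, hilbertSeries_bot, sub_zero, ← PowerSeries.invOneSubPow_inv_eq_one_sub_pow,
      mul_right_comm, Units.inv_val, one_mul]
  refine ⟨Q.hilbertPoly X.card, ?_⟩
  filter_upwards [eventually_gt_atTop Q.natDegree] with n hn
  rw [← Polynomial.coeff_mul_invOneSubPow_eq_hilbertPoly_eval X.card hn, hseries, hilbertSeries,
    PowerSeries.coeff_mk, gradedPiece, Submodule.restrictScalars_top, top_inf_eq]

end HilbertSeries

section BracketPow

lemma bracketPow_top {R : Type*} [CommSemiring R] (q : ℕ) : bracketPow (⊤ : Ideal R) q = ⊤ :=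
  (Ideal.eq_top_iff_one _).2 (Ideal.subset_span ⟨1, Submodule.mem_top, one_pow q⟩)

lemma bracketPow_le_pow {R : Type*} [CommSemiring R] {I J : Ideal R} (h : I ≤ J) (q : ℕ) :
    bracketPow I q ≤ J ^ q := by
  rw [bracketPow, Ideal.span_le]
  rintro _ ⟨a, ha, rfl⟩
  exact Ideal.pow_mem_pow (h ha) q

lemma span_pow_card_mul_add_one_le {R : Type*} [CommSemiring R] (X : Finset R) (t : ℕ) :
    Ideal.span (X : Set R) ^ (X.card * t + 1) ≤ Ideal.span ((· ^ t) '' (X : Set R)) := by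
  classical
  induction X using Finset.induction_on with
  | empty => simp
  | insert a X ha ih =>
    rw [Finset.card_insert_of_notMem ha, Finset.coe_insert, Set.image_insert_eq, Ideal.span_insert,
      Ideal.span_insert, show (X.card + 1) * t + 1 = t + (X.card * t + 1) by ring,
      ← Ideal.span_singleton_pow]
    exact Ideal.sup_pow_add_le_pow_sup_pow.trans (sup_le_sup_left ih _)

lemma span_pow_le_bracketPow {R : Type*} [CommSemiring R] {I : Ideal R} {X : Finset R} {s : ℕ}
    (hX : ∀ x ∈ X, x ^ s ∈ I) (q : ℕ) :
    Ideal.span (X : Set R) ^ (X.card * (s * q) + 1) ≤ bracketPow I q := by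
  refine (span_pow_card_mul_add_one_le X (s * q)).trans (Ideal.span_mono ?_)
  rintro _ ⟨x, hx, rfl⟩
  exact ⟨x ^ s, hX x hx, (pow_mul x s q).symm⟩

end BracketPow

section HomogeneousIdeal

variable {k R : Type*} [CommRing k] [CommRing R] [Algebra k R]

lemma surjective_algebraMap_quotient_span {S : Set R} (hS : Algebra.adjoin k S = ⊤) :
    Function.Surjective (algebraMap k (R ⧸ Ideal.span S)) := by
  have hzero : Ideal.Quotient.mkₐ k (Ideal.span S) '' S ⊆ {0} := by
    rintro _ ⟨x, hx, rfl⟩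
    exact Ideal.Quotient.eq_zero_iff_mem.2 (Ideal.subset_span hx)
  rw [Algebra.surjective_algebraMap_iff, ← (AlgHom.range_eq_top _).2
    (Ideal.Quotient.mkₐ_surjective k (Ideal.span S)), ← Algebra.map_top, ← hS, AlgHom.map_adjoin,
    eq_bot_iff]
  exact Algebra.adjoin_le (hzero.trans (Set.singleton_subset_iff.2 (zero_mem _)))

lemma exists_finset_surjective_algebraMap [IsNoetherianRing R] {S : Set R}
    (hS : Algebra.adjoin k S = ⊤) :
    ∃ X : Finset R, ↑X ⊆ S ∧
      Function.Surjective (algebraMap k (R ⧸ Ideal.span (X : Set R))) := by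
  obtain ⟨X, hXS, hspan⟩ :=
    (Submodule.fg_span_iff_fg_span_finset_subset S).1 (IsNoetherian.noetherian (Ideal.span S))
  have hspan : Ideal.span S = Ideal.span (X : Set R) := hspan
  exact ⟨X, hXS, hspan ▸ surjective_algebraMap_quotient_span hS⟩

variable {𝒜 : ℤ → Submodule k R} [GradedAlgebra 𝒜] {I : Ideal R}

/-- The Artinian property gives `x ^ s * (1 - x * r) ∈ I`, and `x * r` has no component of degree
zero. -/
lemma exists_pow_mem_of_isHomogeneous (hneg : ∀ j < 0, 𝒜 j = ⊥) (hI : I.IsHomogeneous 𝒜)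
    [IsArtinian R (R ⧸ I)] {i : ℤ} (hi : 0 < i) {x : R} (hx : x ∈ 𝒜 i) : ∃ s : ℕ, x ^ s ∈ I := by
  obtain ⟨s, r, hr⟩ := IsArtinian.exists_pow_succ_smul_dvd x (1 : R ⧸ I)
  obtain ⟨r, rfl⟩ := Ideal.Quotient.mk_surjective r
  have hmem : x ^ s • (1 - x • r) ∈ I := by
    rw [smul_sub, ← mul_smul, ← pow_succ, ← Ideal.Quotient.mk_eq_mk_iff_sub_mem]
    exact hr.symm
  have hproj : gradedProj 𝒜 0 (1 - x • r) = 1 := by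
    rw [map_sub, gradedProj_of_mem (SetLike.GradedOne.one_mem (A := 𝒜)), ← add_neg_cancel i,
      gradedProj_smul 𝒜 𝒜 hx, (Submodule.eq_bot_iff _).1 (hneg (-i) (by lia)) _
        (gradedProj_mem 𝒜 (-i) r), smul_zero, sub_zero]
  have hcomp : gradedProj 𝒜 (s • i + 0) (x ^ s • (1 - x • r)) ∈ I := hI _ hmem
  rw [gradedProj_smul 𝒜 𝒜 (SetLike.pow_mem_graded s hx), hproj, smul_eq_mul, mul_one] at hcomp
  exact ⟨s, hcomp⟩

lemma le_span_of_isHomogeneous_of_ne_top {k R : Type*} [Field k] [CommRing R] [Algebra k R]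
    {𝒜 : ℤ → Submodule k R} [GradedAlgebra 𝒜] {I : Ideal R} (hneg : ∀ j < 0, 𝒜 j = ⊥)
    (hI : I.IsHomogeneous 𝒜) (hItop : I ≠ ⊤) {X : Set R} (hX : ∀ x ∈ X, x ∈ 𝒜 1)
    (hkX : Function.Surjective (algebraMap k (R ⧸ Ideal.span X))) : I ≤ Ideal.span X := by
  intro a ha
  obtain ⟨c, hc⟩ := hkX (Ideal.Quotient.mk _ a)
  have hac : a - algebraMap k R c ∈ Ideal.span X :=
    (Ideal.Quotient.mk_eq_mk_iff_sub_mem _ _).1 hc.symm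
  have hproj : gradedProj 𝒜 0 (a - algebraMap k R c) = 0 :=
    gradedProj_eq_zero_of_mem_pow_smul_top hneg hX (q := 1) (by lia) (by simpa using hac)
  rw [map_sub, gradedProj_of_mem (SetLike.algebraMap_mem_graded 𝒜 c), sub_eq_zero] at hproj
  have hcI : algebraMap k R c ∈ I := hproj ▸ hI 0 ha
  have hc0 : c = 0 := by
    contrapose! hItop
    exact I.eq_top_of_isUnit_mem hcI ((IsUnit.mk0 c hItop).map (algebraMap k R))
  rwa [hc0, map_zero, sub_zero] at hac

end HomogeneousIdeal

section QuotPieceDim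

variable {k R M : Type*} [Field k] [CommRing R] [Algebra k R] [AddCommGroup M] [Module R M]
  [Module k M] [IsScalarTower k R M] {ℳ : ℤ → Submodule k M} {N : Submodule R M} {j : ℤ}

lemma quotPieceDim_eq_zero_of_le (h : ℳ j ≤ N.restrictScalars k) : quotPieceDim k ℳ N j = 0 := by
  have hmap : (ℳ j).map (N.mkQ.restrictScalars k) = ⊥ :=
    (Submodule.eq_bot_iff _).2 fun _ ⟨_, hm, hmk⟩ =>
      hmk ▸ (Submodule.Quotient.mk_eq_zero N).2 (h hm)
  rw [quotPieceDim, hmap, finrank_bot]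

lemma quotPieceDim_eq_finrank_of_disjoint (h : Disjoint (N.restrictScalars k) (ℳ j)) :
    quotPieceDim k ℳ N j = Module.finrank k (ℳ j) := by
  rw [quotPieceDim, ← LinearMap.range_domRestrict, LinearMap.finrank_range_of_inj]
  rwa [LinearMap.injective_domRestrict_iff, LinearMap.ker_restrictScalars, Submodule.ker_mkQ,
    disjoint_comm]

variable {𝒜 : ℤ → Submodule k R} [DirectSum.Decomposition ℳ] [SetLike.GradedSMul 𝒜 ℳ]

lemma exists_quotPieceDim_bracketPow_eq_zero [Module.Finite R M] {X : Finset R}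
    (hX : ∀ x ∈ X, x ∈ 𝒜 1)
    (hkX : Function.Surjective (algebraMap k (R ⧸ Ideal.span (X : Set R)))) {I : Ideal R} {s : ℕ}
    (hXI : ∀ x ∈ X, x ^ s ∈ I) :
    ∃ L : ℕ, ∀ q : ℕ, 1 ≤ q → ∀ j : ℤ, L * q ≤ j →
      quotPieceDim k ℳ (bracketPow I q • (⊤ : Submodule R M)) j = 0 := by
  obtain ⟨D, hD⟩ := exists_le_pow_smul_top (ℳ := ℳ) hX hkX
  refine ⟨D.toNat + X.card * s + 1, fun q hq j hj => quotPieceDim_eq_zero_of_le ?_⟩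
  have hqpos : (1 : ℤ) ≤ q := by exact_mod_cast hq
  have hdeg : D + (X.card * (s * q) + 1 : ℕ) ≤ j := calc
    D + (X.card * (s * q) + 1 : ℕ) = D + X.card * s * q + 1 := by push_cast; ring
    _ ≤ D.toNat * q + X.card * s * q + q := by
      have := D.self_le_toNat.trans (le_mul_of_one_le_right (Int.natCast_nonneg _) hqpos)
      lia
    _ = (D.toNat + X.card * s + 1 : ℕ) * q := by push_cast; ring
    _ ≤ j := hj
  have hle : Ideal.span (X : Set R) ^ (X.card * (s * q) + 1) • (⊤ : Submodule R M) ≤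
      bracketPow I q • ⊤ := Submodule.smul_mono_left (span_pow_le_bracketPow hXI q)
  exact (hD _ j hdeg).trans hle

lemma quotPieceDim_bracketPow_eq_finrank (hneg : ∀ j < 0, ℳ j = ⊥) {X : Set R}
    (hX : ∀ x ∈ X, x ∈ 𝒜 1) {I : Ideal R} (hIX : I ≤ Ideal.span X) {q : ℕ} (hj : j < q) :
    quotPieceDim k ℳ (bracketPow I q • (⊤ : Submodule R M)) j = Module.finrank k (ℳ j) := by
  refine quotPieceDim_eq_finrank_of_disjoint (Submodule.disjoint_def.2 fun m hmq hmj => ?_)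
  rw [← gradedProj_of_mem hmj]
  exact gradedProj_eq_zero_of_mem_pow_smul_top hneg hX hj
    (Submodule.smul_mono_left (bracketPow_le_pow hIX q) hmq)

/-- Convergence at the single point `1 / p` bounds `dim_k M_j` along `j = pⁿ`, which controls the
degree of the Hilbert polynomial of `M`. -/
lemma exists_finrank_le_of_tendsto [IsNoetherian R M] (hneg : ∀ j < 0, ℳ j = ⊥) {X : Finset R}
    (hX : ∀ x ∈ X, x ∈ 𝒜 1)
    (hkX : Function.Surjective (algebraMap k (R ⧸ Ideal.span (X : Set R)))) {I : Ideal R}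
    (hIX : I ≤ Ideal.span X) {p e : ℕ} (hp : 2 ≤ p) {l : ℝ}
    (hlim : Tendsto (fun n : ℕ => (1 / (p : ℝ) ^ n) ^ e *
      quotPieceDim k ℳ (bracketPow I (p ^ n) • (⊤ : Submodule R M)) ⌊1 / (p : ℝ) * p ^ n⌋)
      atTop (nhds l)) :
    ∃ C : ℝ, ∀ n : ℕ, (Module.finrank k (ℳ n) : ℝ) ≤ C * ((n : ℝ) + 1) ^ e := by
  obtain ⟨P, hP⟩ := exists_eval_eq_finrank hneg hX hkX
  obtain ⟨B, hB⟩ := hlim.bddAbove_range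
  have hp0 : (0 : ℝ) < p := by positivity
  have hle (n : ℕ) :
      (Module.finrank k (ℳ (p ^ n : ℕ)) : ℝ) ≤ B * p ^ e * ((p ^ n : ℕ) : ℝ) ^ e := by
    have hfloor : ⌊1 / (p : ℝ) * p ^ (n + 1)⌋ = (p ^ n : ℕ) := by
      rw [← Int.floor_natCast (R := ℝ)]
      congr 1
      push_cast
      rw [pow_succ', one_div, inv_mul_cancel_left₀ hp0.ne']
    have hn := hB ⟨n + 1, rfl⟩
    have hlt : ((p ^ n : ℕ) : ℤ) < (p ^ (n + 1) : ℕ) := by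
      exact_mod_cast Nat.pow_lt_pow_right hp n.lt_succ_self
    simp only [hfloor, quotPieceDim_bracketPow_eq_finrank hneg hX hIX hlt] at hn
    rw [one_div, inv_pow, inv_mul_le_iff₀ (by positivity)] at hn
    refine hn.trans_eq ?_
    push_cast
    ring
  exact exists_le_mul_pow_of_eventually_eq_eval (fun n => Nat.cast_nonneg _) hP
    ((tendsto_pow_atTop_atTop_of_one_lt hp).frequently (Eventually.of_forall hle).frequently)

lemma exists_quotPieceDim_le_of_tendsto [IsNoetherian R M] [GradedAlgebra 𝒜]
    (h𝒜neg : ∀ j < 0, 𝒜 j = ⊥) (hneg : ∀ j < 0, ℳ j = ⊥) {X : Finset R} (hX : ∀ x ∈ X, x ∈ 𝒜 1)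
    (hkX : Function.Surjective (algebraMap k (R ⧸ Ideal.span (X : Set R)))) {I : Ideal R}
    (hI : I.IsHomogeneous 𝒜) {p e : ℕ} (hp : 2 ≤ p) {l : ℝ}
    (hlim : Tendsto (fun n : ℕ => (1 / (p : ℝ) ^ n) ^ e *
      quotPieceDim k ℳ (bracketPow I (p ^ n) • (⊤ : Submodule R M)) ⌊1 / (p : ℝ) * p ^ n⌋)
      atTop (nhds l)) :
    ∃ C : ℝ, ∀ q j : ℕ,
      (quotPieceDim k ℳ (bracketPow I q • (⊤ : Submodule R M)) j : ℝ) ≤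
        C * ((j : ℝ) + 1) ^ e := by
  rcases eq_or_ne I ⊤ with rfl | hItop
  · refine ⟨0, fun q j => ?_⟩
    rw [bracketPow_top, Submodule.top_smul, quotPieceDim_eq_zero_of_le fun _ _ => Submodule.mem_top,
      Nat.cast_zero, zero_mul]
  · have hIX := le_span_of_isHomogeneous_of_ne_top h𝒜neg hI hItop hX hkX
    obtain ⟨C, hle⟩ := exists_finrank_le_of_tendsto hneg hX hkX hIX hp hlim
    refine ⟨C, fun q j => le_trans ?_ (hle j)⟩
    have := finiteDimensional_of_gradedSMul hX hkX hneg j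
    exact_mod_cast Submodule.finrank_map_le _ _

end QuotPieceDim

section Density

variable {k R M : Type*} [Field k] [CommRing R] [Algebra k R] [AddCommGroup M] [Module R M]
  [Module k M] [IsScalarTower k R M]

lemma FnGen_eq_inv_smul_tsum (ℳ : ℤ → Submodule k M) (I : Ideal R) {p d : ℕ} (hd : 1 ≤ d) (n : ℕ)
    (y : ℂ) :
    FnGen k ℳ I p d n y = ((p : ℝ) ^ n)⁻¹ • ∑' j : ℤ,
      ((1 / (p : ℝ) ^ n) ^ (d - 1) *
        (quotPieceDim k ℳ (bracketPow I (p ^ n) • (⊤ : Submodule R M)) j : ℝ)) •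
        exp (-Complex.I * y * (j / (p : ℝ) ^ n : ℝ)) := by
  obtain ⟨e, rfl⟩ := Nat.exists_eq_add_of_le' hd
  simp only [FnGen, Complex.real_smul, Nat.add_sub_cancel]
  push_cast
  simp only [mul_assoc, mul_div_assoc, tsum_mul_left]
  rw [← mul_assoc, pow_succ', one_div]

theorem frobenius_poincare_fourier_of_density_general [Algebra.FiniteType k R] {p : ℕ} (hp : 2 ≤ p)
    (𝒜 : ℤ → Submodule k R) [GradedAlgebra 𝒜] (h𝒜neg : ∀ t < 0, 𝒜 t = ⊥)
    (hstd : Algebra.adjoin k (𝒜 1 : Set R) = ⊤) {d : ℕ} (hd : 1 ≤ d)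
    {I : Ideal R} (hI : I.IsHomogeneous 𝒜) (hIfl : IsFiniteLength R (R ⧸ I)) [Module.Finite R M]
    (ℳ : ℤ → Submodule k M) [DirectSum.Decomposition ℳ] (hℳneg : ∀ t < 0, ℳ t = ⊥)
    [SetLike.GradedSMul 𝒜 ℳ] {g : ℝ → ℝ}
    (hgconv : ∀ x : ℝ, Tendsto (fun n : ℕ => (1 / (p : ℝ) ^ n) ^ (d - 1) *
      (quotPieceDim k ℳ (bracketPow I (p ^ n) • (⊤ : Submodule R M)) ⌊x * (p : ℝ) ^ n⌋ : ℝ))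
      atTop (nhds (g x))) (y : ℂ) :
    Integrable (fun x : ℝ => (g x : ℂ) * exp (-Complex.I * y * x)) ∧
      Tendsto (fun n => FnGen k ℳ I p d n y) atTop
        (nhds (∫ x : ℝ, (g x : ℂ) * exp (-Complex.I * y * x))) := by
  have : IsNoetherianRing R := Algebra.FiniteType.isNoetherianRing k R
  have : IsArtinian R (R ⧸ I) := (isFiniteLength_iff_isNoetherian_isArtinian.1 hIfl).2
  obtain ⟨X, hX, hkX⟩ := exists_finset_surjective_algebraMap hstd
  choose! s hs using fun x (hx : x ∈ X) =>
    exists_pow_mem_of_isHomogeneous h𝒜neg hI one_pos (hX hx)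
  obtain ⟨L, hL⟩ := exists_quotPieceDim_bracketPow_eq_zero (ℳ := ℳ) hX hkX
    fun x hx => I.pow_mem_of_pow_mem (hs x hx) (Finset.le_sup (f := s) hx)
  obtain ⟨C, hle⟩ :=
    exists_quotPieceDim_le_of_tendsto h𝒜neg hℳneg hX hkX hI hp (hgconv (1 / p))
  have hq (n : ℕ) : 1 ≤ (p : ℝ) ^ n := one_le_pow₀ (by exact_mod_cast one_le_two.trans hp)
  simp only [FnGen_eq_inv_smul_tsum ℳ I hd, ← Complex.real_smul]
  refine integrable_and_tendsto_riemannSum_of_le_pow (L := L)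
    (f := fun n j => quotPieceDim k ℳ (bracketPow I (p ^ n) • (⊤ : Submodule R M)) j)
    (w := fun t : ℝ => exp (-Complex.I * y * t)) (by fun_prop) hq
    (tendsto_pow_atTop_atTop_of_one_lt (by exact_mod_cast hp)) (fun n j => Nat.cast_nonneg _)
    (fun n j hj => ?_) (fun n j hj => ?_) (fun n j => hle (p ^ n) j) hgconv
  · rw [quotPieceDim_eq_zero_of_le (by rw [hℳneg j hj]; exact bot_le), Nat.cast_zero]
  · rw [hL (p ^ n) (by exact_mod_cast hq n) j (by exact_mod_cast hj), Nat.cast_zero]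

end Density

/-- **The Frobenius–Poincaré function is the holomorphic Fourier transform of the
Hilbert–Kunz density function.**  Here `R` is standard graded of dimension `d ≥ 1`,
`g_n(x) = p^{-n(d-1)} λ_k((M/I^{[p^n]}M)_{⌊xp^n⌋})` converges pointwise to the compactly
supported density function `g`, and `∫_ℝ g(x) e^{-iyx} dx = F(M,R,I,d)(y)`. -/
theorem frobenius_poincare_fourier_of_density
    (k R M : Type) [Field k] [CommRing R] [Algebra k R] [Algebra.FiniteType k R]
    (p : ℕ) (hp : p.Prime) [CharP R p]
    (𝒜 : ℤ → Submodule k R) [GradedAlgebra 𝒜]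
    (h𝒜neg : ∀ t : ℤ, t < 0 → 𝒜 t = ⊥)
    (h𝒜zero : ∀ x ∈ 𝒜 0, ∃ c : k, algebraMap k R c = x)
    (hstd : Algebra.adjoin k ((𝒜 1 : Submodule k R) : Set R) = ⊤)
    (d : ℕ) (hd1 : 1 ≤ d) (hd : ringKrullDim R = d)
    (I : Ideal R) (hI : Ideal.IsHomogeneous 𝒜 I) (hIfl : IsFiniteLength R (R ⧸ I))
    [AddCommGroup M] [Module R M] [Module k M] [IsScalarTower k R M] [Module.Finite R M]
    (ℳ : ℤ → Submodule k M) [DirectSum.Decomposition ℳ]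
    (hℳneg : ∀ t : ℤ, t < 0 → ℳ t = ⊥)
    (hℳ : ∀ (a b : ℤ), ∀ r ∈ 𝒜 a, ∀ x ∈ ℳ b, r • x ∈ ℳ (a + b))
    (g : ℝ → ℝ)
    (hgconv : ∀ x : ℝ,
      Tendsto (fun n : ℕ => (1 / (p : ℝ) ^ n) ^ (d - 1) *
          (quotPieceDim k (R := R) ℳ (bracketPow I (p ^ n) • ⊤) ⌊x * (p : ℝ) ^ n⌋ : ℝ))
        atTop (nhds (g x)))
    (hgsupp : HasCompactSupport g)
    (y : ℂ) (FP : ℂ)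
    (hFP : Tendsto (fun n : ℕ => FnGen k ℳ I p d n y) atTop (nhds FP)) :
    Integrable (fun x : ℝ => (g x : ℂ) * Complex.exp (-Complex.I * y * (x : ℂ))) volume ∧
    ∫ x : ℝ, (g x : ℂ) * Complex.exp (-Complex.I * y * (x : ℂ)) = FP := by
  have : SetLike.GradedSMul 𝒜 ℳ := ⟨fun {a b r x} hr hx => hℳ a b r hr x hx⟩
  obtain ⟨hint, hlim⟩ := frobenius_poincare_fourier_of_density_general hp.two_le 𝒜 h𝒜neg hstd hd1
    hI hIfl ℳ hℳneg hgconv y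
  exact ⟨hint, tendsto_nhds_unique hlim hFP⟩

end
end

section
/- Let R be a finitely generated ℕ-graded k-algebra of Krull dimension d and let f_1, …, f_d be a homogeneous system of parameters of R of degrees δ_1, …, δ_d. Then the Hilbert–Samuel multiplicity of R with respect to the ideal (f_1, …, f_d), namely d!·lim_{n→∞} n^{-d} λ_k(R/(f_1,…,f_d)^n), equals δ_1 δ_2 ⋯ δ_d · e_R, where e_R = d!·lim_{n→∞} n^{-d} Σ_{j≤n} λ_k(R_j) is the Hilbert–Samuel multiplicity of R. -/
open Filter

noncomputable section

/-!
Let the polynomial ring `A = k[X_1, …, X_d]` act on a graded module `M` (for instance `M = R`) by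
letting `X_i` act as `f_i`. By graded Nakayama, `M` is generated over `A` by finitely many
homogeneous elements. Both `⨁_{j ≤ n} M_j` and `M / (f_1, …, f_d)^n M` then compare, up to bounded
shifts of `n`, with the `k`-space of combinations of these generators whose coefficients have degree
at most `n`; for the first one the variable `X_i` has degree `δ_i`, for the second one degree `1`.
Clearing denominators with respect to a maximal independent family, the dimension of this space
grows like `rank_A M` times the number of monomials of degree at most `n`. Dividing exponents
coordinatewise by `δ_i` with remainder shows that weighting divides the number of these monomials by
`δ_1 ⋯ δ_d`, asymptotically.
-/

namespace HilbertSamuel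

/-- `u n` grows like `e * n ^ d / d!`. For the Hilbert–Samuel function of a `d`-dimensional module,
`e` is its multiplicity; taking `d` larger than the dimension gives `e = 0`. -/
def HasMultiplicity (d : ℕ) (u : ℕ → ℝ) (e : ℝ) : Prop :=
  Tendsto (fun n : ℕ => (d.factorial : ℝ) / (n : ℝ) ^ d * u n) atTop (nhds e)

namespace HasMultiplicity

variable {d : ℕ} {u v : ℕ → ℝ} {a b : ℝ}

lemma sub (hu : HasMultiplicity d u a) (hv : HasMultiplicity d v b) :
    HasMultiplicity d (fun n => u n - v n) (a - b) := by
  simpa only [HasMultiplicity, mul_sub] using Tendsto.sub hu hv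

lemma const_mul (c : ℝ) (hu : HasMultiplicity d u a) :
    HasMultiplicity d (fun n => c * u n) (c * a) := by
  simpa only [HasMultiplicity, mul_left_comm] using Tendsto.const_mul c hu

lemma comp_add_iff (c : ℕ) :
    HasMultiplicity d (fun n => u (n + c)) a ↔ HasMultiplicity d u a := by
  have ratio : Tendsto (fun n : ℕ => ((n : ℝ) / (n + c)) ^ d) atTop (nhds 1) := by
    simpa only [one_pow] using (tendsto_natCast_div_add_atTop (c : ℝ)).pow d
  have mul_ratio : (fun n : ℕ => d.factorial / (n : ℝ) ^ d * u (n + c) * (n / (n + c)) ^ d)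
      =ᶠ[atTop] fun n => d.factorial / ((n + c : ℕ) : ℝ) ^ d * u (n + c) := by
    filter_upwards [eventually_gt_atTop 0] with n hn
    have : (n : ℝ) ≠ 0 := by positivity
    push_cast
    rw [div_pow]
    field_simp
  rw [HasMultiplicity, HasMultiplicity, ← tendsto_add_atTop_iff_nat c (f := fun n : ℕ => _ * u n),
    ← tendsto_congr' mul_ratio, ← tendsto_mul_iff_of_ne_zero ratio one_ne_zero, mul_one]

lemma of_le_of_le {h : ℕ → ℝ} (c : ℕ) (hu : HasMultiplicity d u a) (hv : HasMultiplicity d v a)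
    (huh : ∀ n, u n ≤ h (n + c)) (hhv : ∀ n, h (n + c) ≤ v n) : HasMultiplicity d h a :=
  (comp_add_iff c).1 <| tendsto_of_tendsto_of_tendsto_of_le_of_le hu hv
    (fun n => mul_le_mul_of_nonneg_left (huh n) (by positivity))
    (fun n => mul_le_mul_of_nonneg_left (hhv n) (by positivity))

lemma of_shift_bounds {h : ℕ → ℝ} {r m : ℝ} (c : ℕ) (hu : HasMultiplicity d u a)
    (lower : ∀ n, r * u n ≤ h (n + c))
    (upper : ∀ n, h (n + c) + m * u n ≤ r * u (n + c) + m * u (n + c)) :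
    HasMultiplicity d h (r * a) := by
  have hv : HasMultiplicity d (fun n => (r + m) * u (n + c) - m * u n) (r * a) := by
    have := (((comp_add_iff c).2 hu).const_mul (r + m)).sub (hu.const_mul m)
    rwa [← sub_mul, add_sub_cancel_right] at this
  exact (hu.const_mul r).of_le_of_le c hv lower fun n => by linarith [upper n]

end HasMultiplicity

lemma hasMultiplicity_choose (d : ℕ) : HasMultiplicity d (fun n => n.choose d) 1 := by
  have h := (Asymptotics.isEquivalent_iff_tendsto_one ?_).1 (isEquivalent_choose d)
  · refine h.congr fun n => ?_
    simp only [Pi.div_apply, div_div_eq_mul_div]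
    ring
  · filter_upwards [eventually_gt_atTop 0] with n hn
    positivity

section LatticePoints

variable {σ : Type*}

/-- The exponent vectors of the monomials of degree at most `n`, where the variable `i` has degree
`w i`. -/
def weightLE (w : σ → ℕ) (n : ℕ) : Set (σ →₀ ℕ) :=
  {α | Finsupp.weight w α ≤ n}

lemma mem_weightLE_one {n : ℕ} {α : σ →₀ ℕ} : α ∈ weightLE 1 n ↔ α.degree ≤ n := by
  rw [Finsupp.degree_eq_weight_one]
  rfl

lemma finite_weightLE [Finite σ] {w : σ → ℕ} (hw : ∀ i, 0 < w i) (n : ℕ) :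
    (weightLE w n).Finite :=
  Finsupp.finite_of_nat_weight_le w (fun i => (hw i).ne') n

variable [Fintype σ]

/-- Exponent vectors of degree at most `n` as vectors of sum exactly `n`; the coordinate `none` is
the slack. -/
def weightLEOneEquiv (n : ℕ) :
    weightLE (1 : σ → ℕ) n ≃ {P : Option σ → ℕ // ∑ o, P o = n} where
  toFun α := ⟨fun o => o.elim (n - ∑ i, α.1 i) α.1, by
    simpa [Fintype.sum_option] using
      Nat.sub_add_cancel (Finsupp.degree_eq_sum α.1 ▸ mem_weightLE_one.1 α.2)⟩
  invFun P := ⟨Finsupp.equivFunOnFinite.symm fun i => P.1 (some i), by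
    have := P.2
    rw [Fintype.sum_option] at this
    simp only [mem_weightLE_one, Finsupp.degree_eq_sum, Finsupp.coe_equivFunOnFinite_symm]
    omega⟩
  left_inv α := by ext; simp
  right_inv P := by
    have := P.2
    rw [Fintype.sum_option] at this
    ext (_ | i)
    · simp only [Finsupp.coe_equivFunOnFinite_symm, Option.elim]
      omega
    · simp

lemma ncard_weightLE_one (n : ℕ) :
    (weightLE (1 : σ → ℕ) n).ncard = (n + Fintype.card σ).choose (Fintype.card σ) := by
  classical
  rw [← Nat.card_coe_set_eq, Nat.card_congr ((weightLEOneEquiv n).trans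
    (Sym.equivNatSumOfFintype (Option σ) n).symm), Nat.card_eq_fintype_card,
    Sym.card_sym_eq_choose, Fintype.card_option, ← Nat.choose_symm_add]
  congr 1
  omega

/-- Coordinatewise Euclidean division of a lattice point by `w`. -/
def divModEquiv (w : σ → ℕ) [∀ i, NeZero (w i)] :
    (σ →₀ ℕ) ≃ (σ →₀ ℕ) × ∀ i, Fin (w i) :=
  (Finsupp.equivFunOnFinite.trans (Equiv.piCongrRight fun i => Nat.divModEquiv (w i))).trans
    ((Equiv.arrowProdEquivProdArrow σ (fun _ => ℕ) fun i => Fin (w i)).trans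
      (Finsupp.equivFunOnFinite.symm.prodCongr (Equiv.refl _)))

lemma weight_divModEquiv (w : σ → ℕ) [∀ i, NeZero (w i)] (γ : σ →₀ ℕ) :
    Finsupp.weight w (divModEquiv w γ).1 + ∑ i, ((divModEquiv w γ).2 i : ℕ) =
      Finsupp.weight 1 γ := by
  simp only [Finsupp.weight_eq_sum, ← Finset.sum_add_distrib]
  refine Finset.sum_congr rfl fun i _ => ?_
  simpa [divModEquiv] using! Nat.div_add_mod' (γ i) (w i)

lemma ncard_weightLE_one_le {w : σ → ℕ} (hw : ∀ i, 0 < w i) (n : ℕ) :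
    (weightLE (1 : σ → ℕ) n).ncard ≤ (∏ i, w i) * (weightLE w n).ncard := by
  have (i : σ) : NeZero (w i) := ⟨(hw i).ne'⟩
  have subset : divModEquiv w '' weightLE 1 n ⊆ weightLE w n ×ˢ Set.univ := by
    rintro _ ⟨γ, hγ, rfl⟩
    have := weight_divModEquiv w γ
    simp only [weightLE, Set.mem_ofPred_eq, Set.mem_prod, Set.mem_univ, and_true] at hγ ⊢
    omega
  simpa [Set.ncard_image_of_injective _ (divModEquiv w).injective, Set.ncard_prod, Nat.card_pi,
    mul_comm] using Set.ncard_le_ncard subset ((finite_weightLE hw n).prod Set.finite_univ)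

lemma prod_mul_ncard_weightLE_le {w : σ → ℕ} (hw : ∀ i, 0 < w i) (n : ℕ) :
    (∏ i, w i) * (weightLE w n).ncard ≤ (weightLE (1 : σ → ℕ) (n + ∑ i, w i)).ncard := by
  have (i : σ) : NeZero (w i) := ⟨(hw i).ne'⟩
  have subset : weightLE w n ×ˢ Set.univ ⊆ divModEquiv w '' weightLE 1 (n + ∑ i, w i) := by
    rintro ⟨α, r⟩ ⟨hα, -⟩
    obtain ⟨γ, hγ⟩ := (divModEquiv w).surjective (α, r)
    have hsum := weight_divModEquiv w γ
    have hr : ∑ i, (r i : ℕ) ≤ ∑ i, w i := Finset.sum_le_sum fun i _ => (r i).2.le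
    refine ⟨γ, ?_, hγ⟩
    simp only [hγ, weightLE, Set.mem_ofPred_eq] at hα hsum ⊢
    omega
  have finite := (finite_weightLE (fun _ => one_pos) (n + ∑ i, w i)).image (divModEquiv w)
  simpa [Set.ncard_image_of_injective _ (divModEquiv w).injective, Set.ncard_prod, Nat.card_pi,
    mul_comm] using Set.ncard_le_ncard subset finite

lemma hasMultiplicity_ncard_weightLE_one :
    HasMultiplicity (Fintype.card σ) (fun n => (weightLE (1 : σ → ℕ) n).ncard) 1 := by
  simpa only [ncard_weightLE_one] using
    (HasMultiplicity.comp_add_iff (Fintype.card σ)).2 (hasMultiplicity_choose (Fintype.card σ))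

theorem hasMultiplicity_ncard_weightLE {w : σ → ℕ} (hw : ∀ i, 0 < w i) :
    HasMultiplicity (Fintype.card σ) (fun n => (weightLE w n).ncard) (∏ i, (w i : ℝ))⁻¹ := by
  have hprod : (∏ i, (w i : ℝ)) ≠ 0 :=
    Finset.prod_ne_zero_iff.2 fun i _ => Nat.cast_ne_zero.2 (hw i).ne'
  have lower := hasMultiplicity_ncard_weightLE_one (σ := σ)
  have upper := (HasMultiplicity.comp_add_iff (∑ i, w i)).2 lower
  have scaled : HasMultiplicity (Fintype.card σ)
      (fun n => (∏ i, (w i : ℝ)) * (weightLE w n).ncard) 1 :=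
    lower.of_le_of_le 0 upper
      (fun n => mod_cast ncard_weightLE_one_le hw n)
      (fun n => mod_cast prod_mul_ncard_weightLE_le hw n)
  simpa [hprod] using scaled.const_mul (∏ i, (w i : ℝ))⁻¹

end LatticePoints

section WeightedDegree

variable {σ : Type*} (k : Type*) [CommRing k]

/-- The polynomials of weighted degree at most `n`, where the variable `X i` has degree `w i`. -/
def weightedDegreeLE (w : σ → ℕ) (n : ℕ) : Submodule k (MvPolynomial σ k) :=
  MvPolynomial.restrictSupport k (weightLE w n)

variable {k} {w : σ → ℕ}

lemma weightedDegreeLE_mono : Monotone (weightedDegreeLE k w) := fun _ _ hmn =>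
  MvPolynomial.restrictSupport_mono k fun _ hα => le_trans hα hmn

lemma weightedDegreeLE_mul_le (m n : ℕ) :
    weightedDegreeLE k w m * weightedDegreeLE k w n ≤ weightedDegreeLE k w (m + n) := by
  rw [weightedDegreeLE, weightedDegreeLE, ← MvPolynomial.restrictSupport_add]
  refine MvPolynomial.restrictSupport_mono k (Set.add_subset_iff.2 fun α hα β hβ => ?_)
  simpa only [weightLE, Set.mem_ofPred_eq, map_add] using add_le_add hα hβ

lemma eventually_mem_weightedDegreeLE (p : MvPolynomial σ k) :
    ∀ᶠ n in atTop, p ∈ weightedDegreeLE k w n := by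
  filter_upwards [eventually_ge_atTop (p.support.sup (Finsupp.weight w))] with n hn α hα
  exact (Finset.le_sup (f := Finsupp.weight w) hα).trans hn

lemma finrank_weightedDegreeLE [Nontrivial k] (n : ℕ) :
    Module.finrank k (weightedDegreeLE k w n) = (weightLE w n).ncard :=
  Module.finrank_eq_nat_card_basis (MvPolynomial.basisRestrictSupport k _)

lemma finite_weightedDegreeLE [Finite σ] (hw : ∀ i, 0 < w i) (n : ℕ) :
    Module.Finite k (weightedDegreeLE k w n) :=
  have := (finite_weightLE hw n).to_subtype
  Module.Finite.of_basis (MvPolynomial.basisRestrictSupport k _)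

end WeightedDegree

section LinearAlgebra

lemma finrank_map_add_finrank_le {k V W : Type*} [Field k] [AddCommGroup V] [Module k V]
    [AddCommGroup W] [Module k W] (φ : V →ₗ[k] W) {P Q : Submodule k V} {H : Submodule k W}
    [Module.Finite k P] [Module.Finite k H] (hQP : Q ≤ P) (hQH : Q.map φ ≤ H) :
    Module.finrank k (P.map φ) + Module.finrank k Q ≤ Module.finrank k H + Module.finrank k P := by
  obtain ⟨C, hdisj, hsup⟩ := IsModularLattice.exists_disjoint_and_sup_eq hQP
  have : Module.Finite k Q := Submodule.finiteDimensional_of_le hQP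
  have : Module.Finite k C := Submodule.finiteDimensional_of_le (hsup ▸ le_sup_right)
  have map_le : P.map φ ≤ H ⊔ C.map φ := by
    rw [← hsup, Submodule.map_sup]
    exact sup_le_sup_right hQH _
  calc Module.finrank k (P.map φ) + Module.finrank k Q
      ≤ Module.finrank k H + Module.finrank k C + Module.finrank k Q := by
        gcongr
        exact (Submodule.finrank_mono map_le).trans <|
          (Submodule.finrank_add_le_finrank_add_finrank _ _).trans <| by
            gcongr
            exact Submodule.finrank_map_le φ C
    _ = Module.finrank k H + Module.finrank k P := by
        rw [add_assoc, add_comm (Module.finrank k C), ← hsup,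
          ← Submodule.finrank_sup_add_finrank_inf_eq, hdisj.eq_bot, finrank_bot, add_zero]

variable {k V ι : Type*} [CommRing k] [AddCommGroup V] [Module k V]

variable (ι) in
/-- The vectors of `V ^ ι` with coordinates in `P`, as functions into `P`. -/
def piConstEquiv (P : Submodule k V) :
    (ι → P) ≃ₗ[k] (Submodule.pi Set.univ fun _ : ι => P) :=
  (LinearEquiv.ofInjective (P.subtype.compLeft ι) P.injective_subtype.comp_left).trans <|
    LinearEquiv.ofEq _ _ (by rw [LinearMap.range_compLeft, Submodule.range_subtype])

variable (P : Submodule k V) [Module.Finite k P]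

instance [Finite ι] : Module.Finite k (Submodule.pi Set.univ fun _ : ι => P) :=
  Module.Finite.equiv (piConstEquiv ι P)

lemma finrank_pi_const [Nontrivial k] [Module.Free k P] [Fintype ι] :
    Module.finrank k (Submodule.pi Set.univ fun _ : ι => P) =
      Fintype.card ι * Module.finrank k P := by
  rw [← (piConstEquiv ι P).finrank_eq, Module.finrank_pi_fintype, Finset.sum_const,
    Finset.card_univ, smul_eq_mul]

end LinearAlgebra

section CoeffSpan

variable {k A M ι : Type*} [CommRing k] [CommRing A] [Algebra k A] [AddCommGroup M] [Module A M]
  [Module k M] [IsScalarTower k A M] [Fintype ι]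

/-- The linear combinations of the family `g` with coefficients in the `k`-submodule `V` of `A`. -/
def coeffSpan (V : Submodule k A) (g : ι → M) : Submodule k M :=
  (Submodule.pi Set.univ fun _ => V).map ((Fintype.linearCombination A g).restrictScalars k)

lemma mem_coeffSpan {V : Submodule k A} {g : ι → M} {x : M} :
    x ∈ coeffSpan V g ↔ ∃ p : ι → A, (∀ i, p i ∈ V) ∧ ∑ i, p i • g i = x := by
  simp only [coeffSpan, Submodule.mem_map, Submodule.mem_pi, Set.mem_univ, true_imp_iff,
    LinearMap.coe_restrictScalars, Fintype.linearCombination_apply]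

lemma smul_mem_coeffSpan {V : Submodule k A} (g : ι → M) {p : A} (hp : p ∈ V) (i : ι) :
    p • g i ∈ coeffSpan V g := by
  classical
  refine mem_coeffSpan.2 ⟨Pi.single i p, fun j => ?_, by simp [Pi.single_apply]⟩
  obtain rfl | hji := eq_or_ne j i <;> simp [*]

lemma coeffSpan_le {V : Submodule k A} {g : ι → M} {N : Submodule k M} :
    coeffSpan V g ≤ N ↔ ∀ p ∈ V, ∀ i, p • g i ∈ N := by
  refine ⟨fun h p hp i => h (smul_mem_coeffSpan g hp i), fun h x hx => ?_⟩
  obtain ⟨p, hp, rfl⟩ := mem_coeffSpan.1 hx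
  exact N.sum_mem fun i _ => h _ (hp i) i

lemma coeffSpan_mono (g : ι → M) : Monotone fun V : Submodule k A => coeffSpan V g :=
  fun _ _ h => coeffSpan_le.2 fun _ hp => smul_mem_coeffSpan g (h hp)

lemma smul_mem_coeffSpan_of_mul_le {U V W : Submodule k A} {g : ι → M} (hU : V * W ≤ U) {p : A}
    (hp : p ∈ V) {x : M} (hx : x ∈ coeffSpan W g) : p • x ∈ coeffSpan U g := by
  obtain ⟨q, hq, rfl⟩ := mem_coeffSpan.1 hx
  exact mem_coeffSpan.2 ⟨p • q, fun i => hU (Submodule.mul_mem_mul hp (hq i)), by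
    simp [Finset.smul_sum, mul_smul]⟩

instance (V : Submodule k A) [Module.Finite k V] (g : ι → M) : Module.Finite k (coeffSpan V g) :=
  inferInstanceAs (Module.Finite k (Submodule.map _ _))

end CoeffSpan

section FinrankCoeffSpan

variable {k A M ι κ : Type*} [Field k] [CommRing A] [Algebra k A] [AddCommGroup M] [Module A M]
  [Module k M] [IsScalarTower k A M] [Fintype ι] [Fintype κ]

lemma finrank_coeffSpan_of_linearIndependent (V : Submodule k A) [Module.Finite k V] {z : κ → M}
    (hz : LinearIndependent A z) :
    Module.finrank k (coeffSpan V z) = Fintype.card κ * Module.finrank k V := by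
  rw [← finrank_pi_const]
  exact (Submodule.equivMapOfInjective ((Fintype.linearCombination A z).restrictScalars k)
    hz.fintypeLinearCombination_injective _).finrank_eq.symm

lemma finrank_coeffSpan_le (V : Submodule k A) [Module.Finite k V] (z : κ → M) :
    Module.finrank k (coeffSpan V z) ≤ Fintype.card κ * Module.finrank k V := by
  rw [← finrank_pi_const]
  exact Submodule.finrank_map_le _ _

lemma card_mul_finrank_le_finrank_coeffSpan {U V W : Submodule k A} [Module.Finite k U]
    [Module.Finite k V] {z : κ → M} (hz : LinearIndependent A z) (hU : V * W ≤ U) {g : ι → M}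
    (hzg : ∀ l, z l ∈ coeffSpan W g) :
    Fintype.card κ * Module.finrank k V ≤ Module.finrank k (coeffSpan U g) := by
  rw [← finrank_coeffSpan_of_linearIndependent V hz]
  exact Submodule.finrank_mono <| coeffSpan_le.2 fun _ hp l =>
    smul_mem_coeffSpan_of_mul_le hU hp (hzg l)

/-- The vectors of `V ^ ι` divisible by `a` contribute nothing to the dimension of
`coeffSpan U g` modulo `coeffSpan U z`. -/
lemma finrank_coeffSpan_add_le [IsDomain A] {U V W : Submodule k A} [Module.Finite k U]
    [Module.Finite k V] (hU : V * W ≤ U) {g : ι → M} {z : κ → M} {a : A} (ha : a ≠ 0) (haW : a ∈ W)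
    (hag : ∀ i, a • g i ∈ coeffSpan W z) :
    Module.finrank k (coeffSpan U g) + Fintype.card ι * Module.finrank k V ≤
      Fintype.card κ * Module.finrank k U + Fintype.card ι * Module.finrank k U := by
  let aV : Submodule k A := V.map (LinearMap.mulLeft k a)
  have finrank_aV : Module.finrank k aV = Module.finrank k V :=
    (Submodule.equivMapOfInjective _ (mul_right_injective₀ ha) V).finrank_eq.symm
  have aV_le : aV ≤ U := Submodule.map_le_iff_le_comap.2 fun p hp =>
    hU (mul_comm p a ▸ Submodule.mul_mem_mul hp haW : a * p ∈ V * W)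
  have coeffSpan_aV_le : coeffSpan aV g ≤ coeffSpan U z := coeffSpan_le.2 <| by
    rintro _ ⟨p, hp, rfl⟩ i
    rw [LinearMap.mulLeft_apply, mul_comm, mul_smul]
    exact smul_mem_coeffSpan_of_mul_le hU hp (hag i)
  have key := finrank_map_add_finrank_le ((Fintype.linearCombination A g).restrictScalars k)
    (Submodule.pi_mono fun _ _ => aV_le) coeffSpan_aV_le
  rw [finrank_pi_const, finrank_pi_const, finrank_aV] at key
  exact key.trans (Nat.add_le_add_right (finrank_coeffSpan_le U z) _)

end FinrankCoeffSpan

section Growth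

lemma exists_linearIndependent_smul_mem_span (A M : Type*) [CommRing A] [IsDomain A]
    [AddCommGroup M] [Module A M] [Module.Finite A M] :
    ∃ z : Fin (Module.finrank A M) → M, LinearIndependent A z ∧
      ∃ a : A, a ≠ 0 ∧ ∀ x, a • x ∈ Submodule.span A (Set.range z) := by
  obtain ⟨z, hz⟩ := exists_linearIndependent_of_le_finrank (R := A) (M := M) le_rfl
  have finrank_quotient : Module.finrank A (M ⧸ Submodule.span A (Set.range z)) = 0 := by
    have := (Submodule.span A (Set.range z)).finrank_quotient_add_finrank
    rw [finrank_span_eq_card hz, Fintype.card_fin] at this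
    omega
  obtain ⟨a, ha, ha0⟩ := Submodule.annihilator_top_inter_nonZeroDivisors
    (Module.finrank_eq_zero_iff_isTorsion.1 finrank_quotient)
  refine ⟨z, hz, a, nonZeroDivisors.ne_zero ha0, fun x => ?_⟩
  rw [← Submodule.Quotient.mk_eq_zero, Submodule.Quotient.mk_smul]
  exact Submodule.mem_annihilator.1 ha _ Submodule.mem_top

lemma eventually_mem_coeffSpan {k M σ ι : Type*} [CommRing k] [AddCommGroup M]
    [Module (MvPolynomial σ k) M] [Module k M] [IsScalarTower k (MvPolynomial σ k) M] [Fintype ι]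
    {w : σ → ℕ} {g : ι → M} {x : M}
    (hx : x ∈ Submodule.span (MvPolynomial σ k) (Set.range g)) :
    ∀ᶠ n in atTop, x ∈ coeffSpan (weightedDegreeLE k w n) g := by
  obtain ⟨p, rfl⟩ := (Submodule.mem_span_range_iff_exists_fun _).1 hx
  filter_upwards [eventually_all.2 fun i => eventually_mem_weightedDegreeLE (w := w) (p i)]
    with n hn
  exact mem_coeffSpan.2 ⟨p, hn, rfl⟩

theorem hasMultiplicity_finrank_coeffSpan {k M σ ι : Type*} [Field k] [AddCommGroup M]
    [Module (MvPolynomial σ k) M] [Module k M] [IsScalarTower k (MvPolynomial σ k) M]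
    [Fintype σ] [Fintype ι] {w : σ → ℕ} (hw : ∀ i, 0 < w i) {g : ι → M}
    (hg : Submodule.span (MvPolynomial σ k) (Set.range g) = ⊤) :
    HasMultiplicity (Fintype.card σ)
      (fun n => Module.finrank k (coeffSpan (weightedDegreeLE k w n) g))
      (Module.finrank (MvPolynomial σ k) M * (∏ i, (w i : ℝ))⁻¹) := by
  have (n : ℕ) := finite_weightedDegreeLE (k := k) hw n
  have : Module.Finite (MvPolynomial σ k) M := ⟨⟨Set.range g |>.toFinite.toFinset, by simpa⟩⟩
  obtain ⟨z, hz, a, ha, haz⟩ := exists_linearIndependent_smul_mem_span (MvPolynomial σ k) M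
  obtain ⟨c, hac, hagc, hzc⟩ := ((eventually_mem_weightedDegreeLE (w := w) a).and <|
    (eventually_all.2 fun i => eventually_mem_coeffSpan (w := w) (haz (g i))).and <|
    eventually_all.2 fun l =>
      eventually_mem_coeffSpan (w := w) (hg ▸ Submodule.mem_top (x := z l))).exists
  have hmul := weightedDegreeLE_mul_le (k := k) (w := w)
  have lower (n : ℕ) := card_mul_finrank_le_finrank_coeffSpan hz (hmul n c) hzc
  have upper (n : ℕ) := finrank_coeffSpan_add_le (hmul n c) ha hac hagc
  simp only [finrank_weightedDegreeLE, Fintype.card_fin] at lower upper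
  exact (hasMultiplicity_ncard_weightLE hw).of_shift_bounds c (m := Fintype.card ι)
    (fun n => mod_cast lower n) fun n => mod_cast upper n

end Growth

section Adic

open MvPolynomial (idealOfVars)

variable {k σ : Type*} [CommRing k]

lemma isCompl_weightedDegreeLE_one_idealOfVars_pow [Finite σ] (n : ℕ) :
    IsCompl (weightedDegreeLE k (1 : σ → ℕ) n)
      ((idealOfVars σ k ^ (n + 1)).restrictScalars k) := by
  constructor
  · refine Submodule.disjoint_def.2 fun p hp hp' => ?_
    rw [← MvPolynomial.support_eq_empty, Finset.eq_empty_iff_forall_notMem]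
    intro α hα
    exact (mem_weightLE_one.1 (hp hα)).not_gt
      ((MvPolynomial.mem_pow_idealOfVars_iff _ _).1 hp' α hα)
  · rw [codisjoint_iff, eq_top_iff]
    intro p _
    rw [p.as_sum]
    refine Submodule.sum_mem _ fun α hα => ?_
    rcases le_or_gt α.degree n with hle | hlt
    · exact Submodule.mem_sup_left <|
        (MvPolynomial.monomial_mem_restrictSupport k).2 (.inl (mem_weightLE_one.2 hle))
    · exact Submodule.mem_sup_right <| (MvPolynomial.monomial_mem_pow_idealOfVars_iff _ _
        (MvPolynomial.mem_support_iff.1 hα)).2 hlt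

variable {M ι κ : Type*} [AddCommGroup M] [Module (MvPolynomial σ k) M] [Module k M]
  [IsScalarTower k (MvPolynomial σ k) M] [Fintype ι] [Fintype κ]

lemma codisjoint_coeffSpan_idealOfVars_pow [Finite σ] {g : ι → M}
    (hg : Submodule.span (MvPolynomial σ k) (Set.range g) = ⊤) (n : ℕ) :
    Codisjoint (coeffSpan (weightedDegreeLE k (1 : σ → ℕ) n) g)
      ((idealOfVars σ k ^ (n + 1) • ⊤ : Submodule (MvPolynomial σ k) M).restrictScalars k) := by
  have split (p : MvPolynomial σ k) := Submodule.codisjoint_iff_exists_add_eq.1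
    (isCompl_weightedDegreeLE_one_idealOfVars_pow (k := k) (σ := σ) n).codisjoint p
  choose q r hq hr hqr using split
  refine Submodule.codisjoint_iff_exists_add_eq.2 fun x => ?_
  obtain ⟨p, rfl⟩ :=
    (Submodule.mem_span_range_iff_exists_fun _).1 (hg ▸ Submodule.mem_top (x := x))
  have sum_mem : ∑ i, r (p i) • g i ∈
      (idealOfVars σ k ^ (n + 1) • ⊤ : Submodule (MvPolynomial σ k) M) :=
    Submodule.sum_mem _ fun i _ => Submodule.smul_mem_smul (hr (p i)) Submodule.mem_top
  refine ⟨_, _, mem_coeffSpan.2 ⟨fun i => q (p i), fun i => hq (p i), rfl⟩, sum_mem, ?_⟩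
  simp only [← Finset.sum_add_distrib, ← add_smul, hqr]

/-- If `x = ∑ l, p l • z l` lies in `𝔪 ^ (s + n + 1) • M`, then multiplying by `a` shows
`a * p l ∈ 𝔪 ^ (s + n + 1)`, which is too large for the degree of `a * p l`. -/
lemma disjoint_coeffSpan_idealOfVars_pow [IsDomain k] [Finite σ] {z : κ → M}
    (hz : LinearIndependent (MvPolynomial σ k) z) {a : MvPolynomial σ k} (ha : a ≠ 0) {s : ℕ}
    (has : a ∈ weightedDegreeLE k 1 s)
    (haz : ∀ x, a • x ∈ Submodule.span (MvPolynomial σ k) (Set.range z)) (n : ℕ) :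
    Disjoint (coeffSpan (weightedDegreeLE k (1 : σ → ℕ) n) z)
      ((idealOfVars σ k ^ (s + n + 1) • ⊤ : Submodule (MvPolynomial σ k) M).restrictScalars k) := by
  refine Submodule.disjoint_def.2 fun x hx hx' => ?_
  obtain ⟨p, hp, rfl⟩ := mem_coeffSpan.1 hx
  have smul_mem : a • ∑ l, p l • z l ∈
      idealOfVars σ k ^ (s + n + 1) • Submodule.span (MvPolynomial σ k) (Set.range z) := by
    have := Submodule.mem_map_of_mem (f := LinearMap.lsmul (MvPolynomial σ k) M a) hx'
    rw [Submodule.map_smul''] at this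
    refine Submodule.smul_mono le_rfl ?_ this
    rintro _ ⟨y, -, rfl⟩
    exact haz y
  obtain ⟨q, hq, hqx⟩ := (Submodule.mem_ideal_smul_span_iff_exists_sum _ _ _).1 smul_mem
  have mul_eq (l : κ) : a * p l = q l := by
    refine congr_fun (hz.fintypeLinearCombination_injective (a₁ := fun l => a * p l) ?_) l
    simpa [Fintype.linearCombination_apply, Finset.smul_sum, mul_smul,
      Finsupp.sum_fintype] using hqx.symm
  refine Finset.sum_eq_zero fun l _ => ?_
  have mul_eq_zero := Submodule.disjoint_def.1
    (isCompl_weightedDegreeLE_one_idealOfVars_pow (s + n)).disjoint (a * p l)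
    (weightedDegreeLE_mul_le s n (Submodule.mul_mem_mul has (hp l))) (mul_eq l ▸ hq l)
  rw [(mul_eq_zero_iff_left ha).1 mul_eq_zero, zero_smul]

end Adic

section Quotient

lemma finite_quotient_of_codisjoint {k V : Type*} [Ring k] [AddCommGroup V] [Module k V]
    {P Q : Submodule k V} [Module.Finite k P] (h : Codisjoint P Q) :
    Module.Finite k (V ⧸ Q) := by
  rw [Module.finite_def, ← (Submodule.map_mkQ_eq_top Q P).2 h.symm.eq_top]
  exact (Module.Finite.iff_fg.1 ‹_›).map _

variable {k V : Type*} [Field k] [AddCommGroup V] [Module k V] {P Q : Submodule k V}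

lemma finrank_quotient_le_of_codisjoint [Module.Finite k P] (h : Codisjoint P Q) :
    Module.finrank k (V ⧸ Q) ≤ Module.finrank k P := by
  rw [← finrank_top, ← (Submodule.map_mkQ_eq_top Q P).2 h.symm.eq_top]
  exact Submodule.finrank_map_le _ _

lemma finrank_le_finrank_quotient_of_disjoint [Module.Finite k (V ⧸ Q)] (h : Disjoint P Q) :
    Module.finrank k P ≤ Module.finrank k (V ⧸ Q) := by
  refine LinearMap.finrank_le_finrank_of_injective (f := Q.mkQ.domRestrict P) ?_
  rwa [← LinearMap.ker_eq_bot, LinearMap.ker_domRestrict, Submodule.ker_mkQ,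
    ← Submodule.disjoint_iff_comap_eq_bot]

end Quotient

section AdicMultiplicity

open MvPolynomial (idealOfVars)

theorem hasMultiplicity_finrank_quotient_idealOfVars_pow (k σ M : Type*) [Field k] [Fintype σ]
    [AddCommGroup M] [Module (MvPolynomial σ k) M] [Module k M]
    [IsScalarTower k (MvPolynomial σ k) M] [Module.Finite (MvPolynomial σ k) M] :
    HasMultiplicity (Fintype.card σ)
      (fun n => Module.finrank k
        (M ⧸ (idealOfVars σ k ^ n • ⊤ : Submodule (MvPolynomial σ k) M).restrictScalars k))
      (Module.finrank (MvPolynomial σ k) M) := by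
  have (n : ℕ) := finite_weightedDegreeLE (k := k) (w := (1 : σ → ℕ)) (fun _ => one_pos) n
  obtain ⟨m, g, hg⟩ := Module.Finite.exists_fin (R := MvPolynomial σ k) (M := M)
  obtain ⟨z, hz, a, ha, haz⟩ := exists_linearIndependent_smul_mem_span (MvPolynomial σ k) M
  obtain ⟨s, has⟩ := (eventually_mem_weightedDegreeLE (w := 1) a).exists
  have codisj := codisjoint_coeffSpan_idealOfVars_pow hg
  have disj := disjoint_coeffSpan_idealOfVars_pow hz ha has haz
  have (n : ℕ) := finite_quotient_of_codisjoint (codisj n)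
  have growth := hasMultiplicity_finrank_coeffSpan (w := 1) (fun _ => one_pos) hg
  have count := hasMultiplicity_ncard_weightLE_one (σ := σ)
  simp only [Pi.one_apply, Nat.cast_one, Finset.prod_const_one, inv_one, mul_one] at growth
  have lower := count.const_mul (Module.finrank (MvPolynomial σ k) M)
  rw [mul_one] at lower
  refine lower.of_le_of_le (s + 1) ((HasMultiplicity.comp_add_iff s).2 growth)
    (fun n => ?_) fun n => ?_
  · have := finrank_le_finrank_quotient_of_disjoint (disj n)
    rw [finrank_coeffSpan_of_linearIndependent _ hz, Fintype.card_fin, finrank_weightedDegreeLE,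
      add_comm s n] at this
    exact_mod_cast this
  · exact_mod_cast finrank_quotient_le_of_codisjoint (codisj (n + s))

end AdicMultiplicity

section Generators

lemma exists_finset_span_sup_eq_top {k V : Type*} [Ring k] [AddCommGroup V] [Module k V]
    {H : Set V} (hH : Submodule.span k H = ⊤) (Q : Submodule k V) [Module.Finite k (V ⧸ Q)] :
    ∃ s : Finset V, ↑s ⊆ H ∧ Submodule.span k (s : Set V) ⊔ Q = ⊤ := by
  classical
  have span_image : Submodule.span k (Q.mkQ '' H) = ⊤ := by
    rw [Submodule.span_image, hH, Submodule.map_top, Submodule.range_mkQ]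
  obtain ⟨t, ht, hspan⟩ := (Submodule.fg_span_iff_fg_span_finset_subset (Q.mkQ '' H)).1 <|
    span_image ▸ Module.finite_def.1 ‹_›
  obtain ⟨s, hs, rfl⟩ := Finset.subset_set_image_iff.1 ht
  refine ⟨s, hs, ?_⟩
  rw [sup_comm, ← Submodule.map_mkQ_eq_top, ← Submodule.span_image, ← Finset.coe_image, ← hspan,
    span_image]

lemma restrictScalars_span_smul_top_le {k A M : Type*} [CommRing k] [CommRing A] [Algebra k A]
    [AddCommGroup M] [Module A M] [Module k M] [IsScalarTower k A M] {S : Set A}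
    {N : Submodule k M} (h : ∀ a ∈ S, ∀ x, a • x ∈ N) :
    (Ideal.span S • ⊤ : Submodule A M).restrictScalars k ≤ N := by
  have span_smul_mem {a : A} (ha : a ∈ Ideal.span S) (x : M) : a • x ∈ N := by
    induction ha using Submodule.span_induction generalizing x with
    | mem a ha => exact h a ha x
    | zero => simp only [zero_smul, zero_mem]
    | add a b _ _ ha hb => exact add_smul a b x ▸ N.add_mem (ha x) (hb x)
    | smul b a _ ha => exact smul_assoc b a x ▸ smul_comm b a x ▸ ha (b • x)
  intro x hx
  rw [Submodule.restrictScalars_mem] at hx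
  induction hx using Submodule.smul_induction_on' with
  | smul a ha y _ => exact span_smul_mem ha y
  | add y _ z _ hy hz => exact N.add_mem hy hz

end Generators

section Grading

variable {k M : Type*} [CommRing k] [AddCommGroup M] [Module k M]

/-- The elements all of whose homogeneous components have degree at most `n`. -/
def degreeLE (ℳ : ℤ → Submodule k M) (n : ℤ) : Submodule k M :=
  ⨆ j ≤ n, ℳ j

variable {ℳ : ℤ → Submodule k M}

lemma pow_smul_mem {A : Type*} [Monoid A] [MulAction A M] {a : A} {e : ℤ}
    (ha : ∀ j, ∀ x ∈ ℳ j, a • x ∈ ℳ (j + e)) (m : ℕ) {j : ℤ} {x : M} (hx : x ∈ ℳ j) :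
    a ^ m • x ∈ ℳ (j + m * e) := by
  induction m with
  | zero => simpa using hx
  | succ m ih =>
    rw [pow_succ', mul_smul, Nat.cast_succ, add_one_mul, ← add_assoc]
    exact ha _ _ ih

variable (ℳ) [DirectSum.Decomposition ℳ]

/-- The projection of a graded module onto its component of degree `n`, as an endomorphism. -/
def homogeneousProj (n : ℤ) : M →ₗ[k] M :=
  (ℳ n).subtype ∘ₗ DirectSum.component k ℤ (fun j => ℳ j) n ∘ₗ
    (DirectSum.decomposeLinearEquiv ℳ).toLinearMap

variable {ℳ}

lemma homogeneousProj_mem (n : ℤ) (x : M) : homogeneousProj ℳ n x ∈ ℳ n :=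
  (DirectSum.decompose ℳ x n).2

lemma homogeneousProj_of_mem {n : ℤ} {x : M} (hx : x ∈ ℳ n) : homogeneousProj ℳ n x = x :=
  DirectSum.decompose_of_mem_same ℳ hx

lemma homogeneousProj_of_mem_ne {j n : ℤ} {x : M} (hx : x ∈ ℳ j) (hjn : j ≠ n) :
    homogeneousProj ℳ n x = 0 :=
  DirectSum.decompose_of_mem_ne ℳ hx hjn

lemma homogeneousProj_smul {A : Type*} [DistribSMul A M] {a : A} {e : ℤ}
    (ha : ∀ j, ∀ x ∈ ℳ j, a • x ∈ ℳ (j + e)) (n : ℤ) (x : M) :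
    homogeneousProj ℳ n (a • x) = a • homogeneousProj ℳ (n - e) x := by
  induction x using DirectSum.Decomposition.inductionOn ℳ with
  | zero => simp only [smul_zero, map_zero]
  | add x y hx hy => simp only [smul_add, map_add, hx, hy]
  | @homogeneous j x =>
    obtain rfl | hne := eq_or_ne (j + e) n
    · rw [homogeneousProj_of_mem (ha j x x.2), add_sub_cancel_right, homogeneousProj_of_mem x.2]
    · rw [homogeneousProj_of_mem_ne (ha j x x.2) hne,
        homogeneousProj_of_mem_ne x.2 fun h => hne (h ▸ sub_add_cancel n e), smul_zero]

lemma span_isHomogeneousElem_eq_top :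
    Submodule.span k {x | SetLike.IsHomogeneousElem ℳ x} = ⊤ := by
  rw [eq_top_iff, ← (DirectSum.Decomposition.isInternal ℳ).submodule_iSup_eq_top]
  exact iSup_le fun j x hx => Submodule.subset_span ⟨j, hx⟩

end Grading

section FinrankDegreeLE

variable {k M : Type*} [Field k] [AddCommGroup M] [Module k M]

lemma finrank_sup_of_iSupIndep {ι : Type*} {p : ι → Submodule k M} (hp : iSupIndep p)
    [∀ i, Module.Finite k (p i)] (s : Finset ι) :
    Module.finrank k (s.sup p : Submodule k M) = ∑ i ∈ s, Module.finrank k (p i) := by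
  classical
  induction s using Finset.induction_on with
  | empty => rw [Finset.sup_empty, finrank_bot, Finset.sum_empty]
  | insert i s hi ih =>
    have disj : p i ⊓ s.sup p = ⊥ :=
      (s.sup_eq_iSup p ▸ hp.disjoint_biSup (y := ↑s) (mod_cast hi)).eq_bot
    rw [Finset.sup_insert, Finset.sum_insert hi, ← ih, ← Submodule.finrank_sup_add_finrank_inf_eq,
      disj, finrank_bot, add_zero]

lemma finrank_degreeLE {ℳ : ℤ → Submodule k M} (hℳ : iSupIndep ℳ) [∀ j, Module.Finite k (ℳ j)]
    (hneg : ∀ j < 0, ℳ j = ⊥) (n : ℤ) :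
    (Module.finrank k (degreeLE ℳ n) : ℝ) =
      ∑' j : ℤ, if j ≤ n then (Module.finrank k (ℳ j) : ℝ) else 0 := by
  have degreeLE_eq : degreeLE ℳ n = (Finset.Icc 0 n).sup ℳ := by
    refine le_antisymm (iSup₂_le fun j hj => ?_) (Finset.sup_le fun j hj => ?_)
    · obtain hj0 | hj0 := lt_or_ge j 0
      · simp only [hneg j hj0, bot_le]
      · exact Finset.le_sup (Finset.mem_Icc.2 ⟨hj0, hj⟩)
    · exact le_iSup₂_of_le j (Finset.mem_Icc.1 hj).2 le_rfl
  rw [degreeLE_eq, finrank_sup_of_iSupIndep hℳ, tsum_eq_sum (s := Finset.Icc 0 n), Nat.cast_sum]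
  · refine Finset.sum_congr rfl fun j hj => ?_
    rw [if_pos (Finset.mem_Icc.1 hj).2]
  · intro j hj
    obtain hj0 | hj0 := lt_or_ge j 0
    · simp [hneg j hj0]
    · rw [if_neg fun hjn => hj (Finset.mem_Icc.2 ⟨hj0, hjn⟩)]

end FinrankDegreeLE

section GradedPolynomialModule

open MvPolynomial (X idealOfVars)

variable {k M σ : Type*} [CommRing k] [AddCommGroup M] [Module k M] [Module (MvPolynomial σ k) M]
  [IsScalarTower k (MvPolynomial σ k) M] {δ : σ → ℕ} {ℳ : ℤ → Submodule k M}

lemma X_mem_weightedDegreeLE (i : σ) : (X i : MvPolynomial σ k) ∈ weightedDegreeLE k δ (δ i) :=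
  (MvPolynomial.monomial_mem_restrictSupport k).2 <| .inl <| by
    simp [weightLE, Finsupp.weight_single]

lemma one_mem_weightedDegreeLE (n : ℕ) : (1 : MvPolynomial σ k) ∈ weightedDegreeLE k δ n :=
  (MvPolynomial.monomial_mem_restrictSupport k).2 <| .inl <| by simp [weightLE]

lemma monomial_smul_mem (hX : ∀ i j, ∀ x ∈ ℳ j, (X i : MvPolynomial σ k) • x ∈ ℳ (j + δ i))
    (α : σ →₀ ℕ) (r : k) {j : ℤ} {x : M} (hx : x ∈ ℳ j) :
    MvPolynomial.monomial α r • x ∈ ℳ (j + Finsupp.weight δ α) := by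
  induction α using Finsupp.induction with
  | zero =>
    rw [MvPolynomial.monomial_zero', ← MvPolynomial.algebraMap_eq, algebraMap_smul, map_zero,
      Nat.cast_zero, add_zero]
    exact (ℳ j).smul_mem r hx
  | single_add i e α _ _ ih =>
    rw [MvPolynomial.monomial_single_add, mul_smul, map_add, Finsupp.weight_single, smul_eq_mul,
      add_comm (e * δ i), Nat.cast_add, Nat.cast_mul, ← add_assoc]
    exact pow_smul_mem (hX i) e ih

variable {ι : Type*} [Fintype ι]

theorem le_coeffSpan_weightedDegreeLE [DirectSum.Decomposition ℳ] (hneg : ∀ j < 0, ℳ j = ⊥)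
    (hδ : ∀ i, 0 < δ i) (hX : ∀ i j, ∀ x ∈ ℳ j, (X i : MvPolynomial σ k) • x ∈ ℳ (j + δ i))
    {g : ι → M} (hg : ∀ l, SetLike.IsHomogeneousElem ℳ (g l))
    (hspan : Submodule.span k (Set.range g) ⊔
      (idealOfVars σ k • ⊤ : Submodule (MvPolynomial σ k) M).restrictScalars k = ⊤) (n : ℕ) :
    ℳ n ≤ coeffSpan (weightedDegreeLE k δ n) g := by
  induction n using Nat.strong_induction_on with
  | h n ih =>
  have le_comap : ⊤ ≤ (coeffSpan (weightedDegreeLE k δ n) g).comap (homogeneousProj ℳ n) := by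
    rw [← hspan]
    refine sup_le (Submodule.span_le.2 ?_) (restrictScalars_span_smul_top_le ?_)
    · rintro _ ⟨l, rfl⟩
      obtain ⟨c, hc⟩ := hg l
      rw [SetLike.mem_coe, Submodule.mem_comap]
      obtain rfl | hne := eq_or_ne c n
      · rw [homogeneousProj_of_mem hc, ← one_smul (MvPolynomial σ k) (g l)]
        exact smul_mem_coeffSpan g (one_mem_weightedDegreeLE n) l
      · rw [homogeneousProj_of_mem_ne hc hne]
        exact zero_mem _
    · rintro _ ⟨i, rfl⟩ x
      rw [Submodule.mem_comap, homogeneousProj_smul (hX i)]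
      obtain hlt | hle := lt_or_ge n (δ i)
      · have proj_eq_zero : homogeneousProj ℳ (n - δ i) x = 0 := by
          simpa [hneg (n - δ i) (by omega)] using homogeneousProj_mem (ℳ := ℳ) (n - δ i) x
        rw [proj_eq_zero, smul_zero]
        exact zero_mem _
      · have proj_mem := ih (n - δ i) (by have := hδ i; omega)
          (homogeneousProj_mem (ℳ := ℳ) _ x)
        rw [Nat.cast_sub hle] at proj_mem
        have hmul := weightedDegreeLE_mul_le (k := k) (w := δ) (δ i) (n - δ i)
        rw [Nat.add_sub_cancel' hle] at hmul
        exact smul_mem_coeffSpan_of_mul_le hmul (X_mem_weightedDegreeLE i) proj_mem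
  intro x hx
  rw [← homogeneousProj_of_mem hx]
  exact le_comap Submodule.mem_top

lemma coeffSpan_weightedDegreeLE_le_degreeLE
    (hX : ∀ i j, ∀ x ∈ ℳ j, (X i : MvPolynomial σ k) • x ∈ ℳ (j + δ i))
    {g : ι → M} {c : ι → ℤ} (hg : ∀ l, g l ∈ ℳ (c l)) {C : ℤ} (hC : ∀ l, c l ≤ C) (n : ℕ) :
    coeffSpan (weightedDegreeLE k δ n) g ≤ degreeLE ℳ (n + C) := by
  refine coeffSpan_le.2 fun p hp l => ?_
  rw [p.as_sum, Finset.sum_smul]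
  refine Submodule.sum_mem _ fun α hα => ?_
  have weight_le : ((Finsupp.weight δ α : ℕ) : ℤ) ≤ n := mod_cast hp hα
  have degree_le : c l + Finsupp.weight δ α ≤ n + C := by linarith [hC l]
  exact le_iSup₂ (f := fun j (_ : j ≤ n + C) => ℳ j) _ degree_le (monomial_smul_mem hX α _ (hg l))

lemma degreeLE_le_coeffSpan {g : ι → M} (hneg : ∀ j < 0, ℳ j = ⊥)
    (hg : ∀ n : ℕ, ℳ n ≤ coeffSpan (weightedDegreeLE k δ n) g) (n : ℕ) :
    degreeLE ℳ n ≤ coeffSpan (weightedDegreeLE k δ n) g := by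
  refine iSup₂_le fun j hj => ?_
  obtain hj0 | hj0 := lt_or_ge j 0
  · exact (hneg j hj0).trans_le bot_le
  · lift j to ℕ using hj0
    exact (hg j).trans (coeffSpan_mono g (weightedDegreeLE_mono (mod_cast hj)))

lemma span_range_eq_top [DirectSum.Decomposition ℳ] {g : ι → M} (hneg : ∀ j < 0, ℳ j = ⊥)
    (hg : ∀ n : ℕ, ℳ n ≤ coeffSpan (weightedDegreeLE k δ n) g) :
    Submodule.span (MvPolynomial σ k) (Set.range g) = ⊤ := by
  rw [← Submodule.restrictScalars_eq_top_iff k, eq_top_iff,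
    ← (DirectSum.Decomposition.isInternal ℳ).submodule_iSup_eq_top]
  refine iSup_le fun j => ?_
  have coeffSpan_le_span : coeffSpan (weightedDegreeLE k δ j.toNat) g ≤
      (Submodule.span (MvPolynomial σ k) (Set.range g)).restrictScalars k :=
    coeffSpan_le.2 fun p _ l => Submodule.smul_mem _ p (Submodule.subset_span ⟨l, rfl⟩)
  exact (le_iSup₂_of_le j (Int.self_le_toNat j) le_rfl).trans
    ((degreeLE_le_coeffSpan hneg hg _).trans coeffSpan_le_span)

lemma exists_finset_homogeneous_le_coeffSpan [DirectSum.Decomposition ℳ]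
    (hneg : ∀ j < 0, ℳ j = ⊥) (hδ : ∀ i, 0 < δ i)
    (hX : ∀ i j, ∀ x ∈ ℳ j, (X i : MvPolynomial σ k) • x ∈ ℳ (j + δ i))
    [Module.Finite k
      (M ⧸ (idealOfVars σ k • ⊤ : Submodule (MvPolynomial σ k) M).restrictScalars k)] :
    ∃ s : Finset M, (∀ x : s, SetLike.IsHomogeneousElem ℳ (x : M)) ∧
      ∀ n : ℕ, ℳ n ≤ coeffSpan (weightedDegreeLE k δ n) ((↑) : s → M) := by
  obtain ⟨s, hs, hspan⟩ := exists_finset_span_sup_eq_top (span_isHomogeneousElem_eq_top (ℳ := ℳ))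
    ((idealOfVars σ k • ⊤ : Submodule (MvPolynomial σ k) M).restrictScalars k)
  have hhom (x : s) : SetLike.IsHomogeneousElem ℳ (x : M) := hs x.2
  refine ⟨s, hhom, le_coeffSpan_weightedDegreeLE hneg hδ hX hhom ?_⟩
  rwa [Subtype.range_coe_subtype, Finset.setOfPred_mem]

lemma finite_of_finite_quotient_idealOfVars [DirectSum.Decomposition ℳ]
    (hneg : ∀ j < 0, ℳ j = ⊥) (hδ : ∀ i, 0 < δ i)
    (hX : ∀ i j, ∀ x ∈ ℳ j, (X i : MvPolynomial σ k) • x ∈ ℳ (j + δ i))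
    [Module.Finite k
      (M ⧸ (idealOfVars σ k • ⊤ : Submodule (MvPolynomial σ k) M).restrictScalars k)] :
    Module.Finite (MvPolynomial σ k) M := by
  obtain ⟨s, -, hs⟩ := exists_finset_homogeneous_le_coeffSpan hneg hδ hX
  have hspan := span_range_eq_top hneg hs
  rw [Subtype.range_coe_subtype, Finset.setOfPred_mem] at hspan
  exact ⟨⟨s, hspan⟩⟩

end GradedPolynomialModule

section GradedMultiplicity

open MvPolynomial (X idealOfVars)

variable {k M σ : Type*} [Field k] [AddCommGroup M] [Module k M] [Module (MvPolynomial σ k) M]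
  [IsScalarTower k (MvPolynomial σ k) M] {δ : σ → ℕ} {ℳ : ℤ → Submodule k M}
  [DirectSum.Decomposition ℳ]
  (hneg : ∀ j < 0, ℳ j = ⊥) (hδ : ∀ i, 0 < δ i)
  (hX : ∀ i j, ∀ x ∈ ℳ j, (X i : MvPolynomial σ k) • x ∈ ℳ (j + δ i))
  [Module.Finite k
    (M ⧸ (idealOfVars σ k • ⊤ : Submodule (MvPolynomial σ k) M).restrictScalars k)]

include hneg hδ hX

theorem hasMultiplicity_tsum_finrank [Fintype σ] :
    HasMultiplicity (Fintype.card σ)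
      (fun n => ∑' j : ℤ, if j ≤ (n : ℤ) then (Module.finrank k (ℳ j) : ℝ) else 0)
      (Module.finrank (MvPolynomial σ k) M * (∏ i, (δ i : ℝ))⁻¹) := by
  obtain ⟨s, hhom, hs⟩ := exists_finset_homogeneous_le_coeffSpan hneg hδ hX
  choose c hc using hhom
  obtain ⟨C, hC⟩ := (Set.finite_range c).bddAbove
  have (n : ℕ) := finite_weightedDegreeLE (k := k) hδ n
  have finite_degreeLE (n : ℕ) : Module.Finite k (degreeLE ℳ n) :=
    Submodule.finiteDimensional_of_le (degreeLE_le_coeffSpan hneg hs n)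
  have (j : ℤ) : Module.Finite k (ℳ j) := Submodule.finiteDimensional_of_le
    (S₂ := degreeLE ℳ j.toNat) (le_iSup₂_of_le j (Int.self_le_toNat j) le_rfl)
  have coeffSpan_le (n : ℕ) : coeffSpan (weightedDegreeLE k δ n) ((↑) : s → M) ≤
      degreeLE ℳ (n + C.toNat : ℕ) := by
    rw [Nat.cast_add]
    exact coeffSpan_weightedDegreeLE_le_degreeLE hX hc
      (fun l => (hC ⟨l, rfl⟩).trans (Int.self_le_toNat C)) n
  have growth := hasMultiplicity_finrank_coeffSpan hδ (span_range_eq_top hneg hs)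
  simp only [← finrank_degreeLE (DirectSum.Decomposition.isInternal ℳ).submodule_iSupIndep hneg]
  exact growth.of_le_of_le C.toNat ((HasMultiplicity.comp_add_iff C.toNat).2 growth)
    (fun n => mod_cast Submodule.finrank_mono (coeffSpan_le n))
    (fun n => mod_cast Submodule.finrank_mono (degreeLE_le_coeffSpan hneg hs (n + C.toNat)))

theorem exists_hasMultiplicity_idealOfVars [Fintype σ] :
    ∃ e : ℝ,
      HasMultiplicity (Fintype.card σ)
        (fun n => ∑' j : ℤ, if j ≤ (n : ℤ) then (Module.finrank k (ℳ j) : ℝ) else 0) e ∧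
      HasMultiplicity (Fintype.card σ)
        (fun n => Module.finrank k
          (M ⧸ (idealOfVars σ k ^ n • ⊤ : Submodule (MvPolynomial σ k) M).restrictScalars k))
        ((∏ i, (δ i : ℝ)) * e) := by
  have := finite_of_finite_quotient_idealOfVars hneg hδ hX
  have prod_ne_zero : (∏ i, (δ i : ℝ)) ≠ 0 :=
    Finset.prod_ne_zero_iff.2 fun i _ => Nat.cast_ne_zero.2 (hδ i).ne'
  refine ⟨_, hasMultiplicity_tsum_finrank hneg hδ hX, ?_⟩
  rw [mul_left_comm, mul_inv_cancel₀ prod_ne_zero, mul_one]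
  exact hasMultiplicity_finrank_quotient_idealOfVars_pow k σ M

end GradedMultiplicity

section ScalarExtension

open MvPolynomial (X idealOfVars)

/-- An `A`-submodule `P` and an `R`-submodule `Q` with the same elements have the same quotient
over a common ring of scalars. -/
def quotientEquivOfRestrictScalarsEq {k A R M : Type*} [CommRing k] [CommRing A] [CommRing R]
    [Algebra k A] [Algebra k R] [AddCommGroup M] [Module k M] [Module A M] [Module R M]
    [IsScalarTower k A M] [IsScalarTower k R M] {P : Submodule A M} {Q : Submodule R M}
    (h : P.restrictScalars k = Q.restrictScalars k) : (M ⧸ P.restrictScalars k) ≃ₗ[k] M ⧸ Q :=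
  (Submodule.quotEquivOfEq _ _ h).trans (Submodule.Quotient.restrictScalarsEquiv k Q)

lemma restrictScalars_idealOfVars_pow_smul_top {k R M σ : Type*} [CommRing k] [CommRing R]
    [Algebra k R] [Algebra (MvPolynomial σ k) R] [AddCommGroup M] [Module k M] [Module R M]
    [Module (MvPolynomial σ k) M] [IsScalarTower k R M] [IsScalarTower k (MvPolynomial σ k) M]
    [IsScalarTower (MvPolynomial σ k) R M] {f : σ → R}
    (hf : ∀ i, algebraMap (MvPolynomial σ k) R (X i) = f i) (n : ℕ) :
    (idealOfVars σ k ^ n • ⊤ : Submodule (MvPolynomial σ k) M).restrictScalars k =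
      (Ideal.span (Set.range f) ^ n • ⊤ : Submodule R M).restrictScalars k := by
  have map_eq : (idealOfVars σ k).map (algebraMap (MvPolynomial σ k) R) =
      Ideal.span (Set.range f) := by
    rw [idealOfVars, Ideal.map_span, ← Set.range_comp]
    congr
    exact funext hf
  have := Ideal.smul_restrictScalars (idealOfVars σ k ^ n) (⊤ : Submodule R M)
  rw [Ideal.map_pow, map_eq, Submodule.restrictScalars_top] at this
  rw [← this]
  rfl

lemma finite_quotient_of_isFiniteLength (k : Type*) {R : Type*} [Field k] [CommRing R]
    [Algebra k R] [Algebra.FiniteType k R] {I : Ideal R} (hI : IsFiniteLength R (R ⧸ I)) :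
    Module.Finite k (R ⧸ I) := by
  have : IsArtinianRing (R ⧸ I) :=
    isArtinian_of_tower R (isFiniteLength_iff_isNoetherian_isArtinian.1 hI).2
  exact Module.finite_of_isArtinianRing k (R ⧸ I)

end ScalarExtension

end HilbertSamuel

open HilbertSamuel in
theorem hilbert_samuel_multiplicity_wrt_hsop_general
    {k R M σ : Type*} [Field k] [CommRing R] [Algebra k R] [AddCommGroup M] [Module k M]
    [Module R M] [IsScalarTower k R M] [Fintype σ]
    (ℳ : ℤ → Submodule k M) [DirectSum.Decomposition ℳ] (hneg : ∀ j < 0, ℳ j = ⊥)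
    (f : σ → R) (δ : σ → ℕ) (hδ : ∀ i, 0 < δ i)
    (hf : ∀ i j, ∀ x ∈ ℳ j, f i • x ∈ ℳ (j + δ i))
    [Module.Finite k (M ⧸ (Ideal.span (Set.range f) • ⊤ : Submodule R M))] :
    ∃ e : ℝ,
      HasMultiplicity (Fintype.card σ)
        (fun n => ∑' j : ℤ, if j ≤ (n : ℤ) then (Module.finrank k (ℳ j) : ℝ) else 0) e ∧
      HasMultiplicity (Fintype.card σ)
        (fun n => Module.finrank k (M ⧸ (Ideal.span (Set.range f) ^ n • ⊤ : Submodule R M)))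
        ((∏ i, (δ i : ℝ)) * e) := by
  let : Algebra (MvPolynomial σ k) R := (MvPolynomial.aeval f).toAlgebra
  let : Module (MvPolynomial σ k) M := Module.compHom M (algebraMap (MvPolynomial σ k) R)
  have : IsScalarTower (MvPolynomial σ k) R M := IsScalarTower.of_compHom _ _ _
  have : IsScalarTower k (MvPolynomial σ k) R :=
    .of_algebraMap_eq' (MvPolynomial.aeval f).comp_algebraMap.symm
  have : IsScalarTower k (MvPolynomial σ k) M := .to₁₂₄ k (MvPolynomial σ k) R M
  have algebraMap_X (i : σ) : algebraMap (MvPolynomial σ k) R (.X i) = f i :=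
    MvPolynomial.aeval_X f i
  have restrictScalars_eq := restrictScalars_idealOfVars_pow_smul_top (M := M) algebraMap_X
  have X_smul_mem (i j) (x) (hx : x ∈ ℳ j) :
      (MvPolynomial.X i : MvPolynomial σ k) • x ∈ ℳ (j + δ i) := by
    rw [← algebraMap_smul R, algebraMap_X]
    exact hf i j x hx
  have : Module.Finite k (M ⧸ (MvPolynomial.idealOfVars σ k • ⊤ :
      Submodule (MvPolynomial σ k) M).restrictScalars k) := by
    have restrictScalars_eq_one := restrictScalars_eq 1
    rw [pow_one, pow_one] at restrictScalars_eq_one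
    exact Module.Finite.equiv (quotientEquivOfRestrictScalarsEq restrictScalars_eq_one).symm
  simpa only [fun n => (quotientEquivOfRestrictScalarsEq (restrictScalars_eq n)).finrank_eq] using
    exists_hasMultiplicity_idealOfVars hneg hδ X_smul_mem

/-- **Hilbert–Samuel multiplicity with respect to an ideal generated by a homogeneous
system of parameters.**  If `f_1, …, f_d` is a homogeneous system of parameters of `R` of
degrees `δ_1, …, δ_d`, then `d!·lim_n n^{-d} λ_k(R/(f_1,…,f_d)^n) = δ_1⋯δ_d · e_R`. -/
theorem hilbert_samuel_multiplicity_wrt_hsop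
    (k R : Type) [Field k] [CommRing R] [Algebra k R] [Algebra.FiniteType k R]
    (𝒜 : ℤ → Submodule k R) [GradedAlgebra 𝒜]
    (h𝒜neg : ∀ t : ℤ, t < 0 → 𝒜 t = ⊥)
    (h𝒜zero : ∀ x ∈ 𝒜 0, ∃ c : k, algebraMap k R c = x)
    (d : ℕ) (hd : ringKrullDim R = d)
    (f : Fin d → R) (δ : Fin d → ℕ) (hδpos : ∀ j, 0 < δ j)
    (hfhom : ∀ j, f j ∈ 𝒜 (δ j))
    (hfl : IsFiniteLength R (R ⧸ Ideal.span (Set.range f))) :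
    ∃ e : ℝ,
      Tendsto (fun n : ℕ => (d.factorial : ℝ) / (n : ℝ) ^ d *
          ∑' j : ℤ, (if j ≤ (n : ℤ) then (Module.finrank k (𝒜 j) : ℝ) else 0))
        atTop (nhds e) ∧
      Tendsto (fun n : ℕ => (d.factorial : ℝ) / (n : ℝ) ^ d *
          (Module.finrank k (R ⧸ (Ideal.span (Set.range f)) ^ n) : ℝ))
        atTop (nhds ((∏ j : Fin d, (δ j : ℝ)) * e)) := by
  have : Module.Finite k (R ⧸ (Ideal.span (Set.range f) • ⊤ : Ideal R)) := by
    rw [smul_eq_mul, Ideal.mul_top]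
    exact HilbertSamuel.finite_quotient_of_isFiniteLength k hfl
  have smul_mem (i : Fin d) (j : ℤ) (x : R) (hx : x ∈ 𝒜 j) : f i • x ∈ 𝒜 (j + δ i) :=
    add_comm (δ i : ℤ) j ▸ SetLike.mul_mem_graded (hfhom i) hx
  have finrank_eq (n : ℕ) :
      Module.finrank k (R ⧸ (Ideal.span (Set.range f) ^ n • ⊤ : Ideal R)) =
        Module.finrank k (R ⧸ Ideal.span (Set.range f) ^ n) := by
    rw [smul_eq_mul, Ideal.mul_top]
  simpa only [HilbertSamuel.HasMultiplicity, Fintype.card_fin, finrank_eq] using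
    hilbert_samuel_multiplicity_wrt_hsop_general 𝒜 h𝒜neg f δ hδpos smul_mem

end
end
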